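/- arXiv:1302.3866 — 2 statements merged into one kernel-verified Lean document; each statement's English description precedes it below -/
import Mathlib

section
/- Let A satisfy (H1), β_i ∈ (-2,0] for all i ∈ I with not all β_i equal to 0, and let u be a solution of the singular Liouville system. For λ > 0 define Σ_λ = {x ∈ ℝ² : x₁ > λ}, u_i^λ(x₁,x₂) = u_i(2λ−x₁, x₂), and w_i^λ = u_i^λ − u_i on Σ_λ. Then the quantity λ̄ := inf{λ > 0 : min{w_1^μ,...,w_n^μ} > 0 in Σ_μ for all μ ≥ λ} equals 0; in particular u_i(−x₁,x₂) ≥ u_i(x₁,x₂) for all x₁ ≥ 0 and all i ∈ I. -/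
open Set MeasureTheory

/-- Hypothesis (H1): symmetric, nonnegative entries, irreducible, invertible. -/
def H1 {n : ℕ} (A : Matrix (Fin n) (Fin n) ℝ) : Prop :=
  A.IsSymm ∧ (∀ i j, 0 ≤ A i j) ∧
  (∀ S : Finset (Fin n), S.Nonempty → S ≠ Finset.univ → ∃ i ∈ S, ∃ j ∈ Sᶜ, A i j ≠ 0) ∧
  IsUnit A.det

/-- The Euclidean norm on ℝ². -/
noncomputable def nrm (x : ℝ × ℝ) : ℝ := Real.sqrt (x.1 ^ 2 + x.2 ^ 2)

/-- The Laplacian on ℝ²: sum of the two second partial derivatives. -/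
noncomputable def lap (u : ℝ × ℝ → ℝ) (x : ℝ × ℝ) : ℝ :=
  deriv (deriv (fun s => u (s, x.2))) x.1 + deriv (deriv (fun t => u (x.1, t))) x.2

/-- Solution (not necessarily radial) of the singular Liouville system on ℝ²
with the finite-energy condition. -/
def PDESolution {n : ℕ} (A : Matrix (Fin n) (Fin n) ℝ) (β : Fin n → ℝ)
    (u : Fin n → ℝ × ℝ → ℝ) : Prop :=
  (∀ i, Continuous (u i)) ∧
  (∀ i, ∀ x : ℝ × ℝ, x ≠ 0 → ContDiffAt ℝ 2 (u i) x) ∧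
  (∀ i, ∀ x : ℝ × ℝ, x ≠ 0 →
      lap (u i) x + ∑ j, A i j * nrm x ^ β j * Real.exp (u j x) = 0) ∧
  (∀ i, Integrable (fun x : ℝ × ℝ => nrm x ^ β i * Real.exp (u i x)))

open Filter Topology

lemma slice1_contDiffAt {f : ℝ × ℝ → ℝ} {x : ℝ × ℝ} (hf : ContDiffAt ℝ 2 f x) :
    ContDiffAt ℝ 2 (fun s => f (s, x.2)) x.1 := by
  have h : ContDiffAt ℝ 2 (fun s : ℝ => (s, x.2)) x.1 := contDiffAt_id.prodMk contDiffAt_const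
  exact ContDiffAt.comp (g := f) x.1 (by simpa using hf) h

lemma slice2_contDiffAt {f : ℝ × ℝ → ℝ} {x : ℝ × ℝ} (hf : ContDiffAt ℝ 2 f x) :
    ContDiffAt ℝ 2 (fun s => f (x.1, s)) x.2 := by
  have h : ContDiffAt ℝ 2 (fun s : ℝ => (x.1, s)) x.2 := contDiffAt_const.prodMk contDiffAt_id
  exact ContDiffAt.comp (g := f) x.2 (by simpa using hf) h

lemma dd_add {f g : ℝ → ℝ} {x : ℝ} (hf : ContDiffAt ℝ 2 f x) (hg : ContDiffAt ℝ 2 g x) :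
    deriv (deriv (fun y => f y + g y)) x = deriv (deriv f) x + deriv (deriv g) x := by
  have := iteratedDeriv_fun_add (n := 2) hf hg
  simpa [iteratedDeriv_succ, iteratedDeriv_zero] using this

lemma lap_add {f g : ℝ × ℝ → ℝ} {x : ℝ × ℝ} (hf : ContDiffAt ℝ 2 f x) (hg : ContDiffAt ℝ 2 g x) :
    lap (fun y => f y + g y) x = lap f x + lap g x := by
  unfold lap
  rw [dd_add (slice1_contDiffAt hf) (slice1_contDiffAt hg),
    dd_add (slice2_contDiffAt hf) (slice2_contDiffAt hg)]
  ring

lemma lap_const_mul (c : ℝ) (f : ℝ × ℝ → ℝ) (x : ℝ × ℝ) :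
    lap (fun y => c * f y) x = c * lap f x := by
  unfold lap
  have h1 : (deriv fun s => c * f (s, x.2)) = fun s => c * deriv (fun s => f (s, x.2)) s := by
    funext s; exact deriv_const_mul_field c
  have h2 : (deriv fun s => c * f (x.1, s)) = fun s => c * deriv (fun s => f (x.1, s)) s := by
    funext s; exact deriv_const_mul_field c
  rw [h1, h2, deriv_const_mul_field, deriv_const_mul_field]; ring

lemma lap_neg (f : ℝ × ℝ → ℝ) (x : ℝ × ℝ) : lap (fun y => - f y) x = - lap f x := by
  have := lap_const_mul (-1) f x
  simpa using this

lemma lap_sub {f g : ℝ × ℝ → ℝ} {x : ℝ × ℝ} (hf : ContDiffAt ℝ 2 f x) (hg : ContDiffAt ℝ 2 g x) :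
    lap (fun y => f y - g y) x = lap f x - lap g x := by
  have := lap_add hf hg.neg
  rw [show (fun y => f y - g y) = fun y => f y + - g y by funext y; ring, this, lap_neg]; ring

lemma lap_congr {f g : ℝ × ℝ → ℝ} {x : ℝ × ℝ} (h : f =ᶠ[𝓝 x] g) : lap f x = lap g x := by
  have c1 : Tendsto (fun s : ℝ => (s, x.2)) (𝓝 x.1) (𝓝 x) := by
    have : Continuous (fun s : ℝ => (s, x.2)) := by fun_prop
    exact this.tendsto' _ _ rfl
  have c2 : Tendsto (fun s : ℝ => (x.1, s)) (𝓝 x.2) (𝓝 x) := by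
    have : Continuous (fun s : ℝ => (x.1, s)) := by fun_prop
    exact this.tendsto' _ _ rfl
  have h1 : (fun s => f (s, x.2)) =ᶠ[𝓝 x.1] fun s => g (s, x.2) := c1.eventually h
  have h2 : (fun s => f (x.1, s)) =ᶠ[𝓝 x.2] fun s => g (x.1, s) := c2.eventually h
  unfold lap
  rw [h1.deriv.deriv_eq, h2.deriv.deriv_eq]

lemma lap_const (c : ℝ) (x : ℝ × ℝ) : lap (fun _ => c) x = 0 := by
  simp [lap]

lemma lap_reflect (f : ℝ × ℝ → ℝ) (μ : ℝ) (x : ℝ × ℝ) :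
    lap (fun y => f (2 * μ - y.1, y.2)) x = lap f (2 * μ - x.1, x.2) := by
  unfold lap
  have h1 : (deriv fun s => f (2 * μ - s, x.2))
      = fun s => - deriv (fun s => f (s, x.2)) (2 * μ - s) := by
    funext s; exact deriv_comp_const_sub (f := fun s => f (s, x.2)) (2 * μ) s
  have h3 : deriv (fun s => - deriv (fun s => f (s, x.2)) (2 * μ - s)) x.1
      = deriv (deriv (fun s => f (s, x.2))) (2 * μ - x.1) := by
    rw [deriv.fun_neg, deriv_comp_const_sub (f := deriv (fun s => f (s, x.2)))]; simp
  simp only []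
  rw [h1, h3]

lemma contDiffAt_reflect {f : ℝ × ℝ → ℝ} {μ : ℝ} {x : ℝ × ℝ}
    (hf : ContDiffAt ℝ 2 f (2 * μ - x.1, x.2)) :
    ContDiffAt ℝ 2 (fun y : ℝ × ℝ => f (2 * μ - y.1, y.2)) x := by
  have h : ContDiffAt ℝ 2 (fun y : ℝ × ℝ => (2 * μ - y.1, y.2)) x := by fun_prop
  exact ContDiffAt.comp (g := f) x hf h

lemma lap_of_hasDerivAt {f : ℝ × ℝ → ℝ} {x : ℝ × ℝ} {f1 f2 : ℝ → ℝ} {a b : ℝ}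
    (h1 : ∀ᶠ s in 𝓝 x.1, HasDerivAt (fun s => f (s, x.2)) (f1 s) s)
    (h2 : ∀ᶠ s in 𝓝 x.2, HasDerivAt (fun s => f (x.1, s)) (f2 s) s)
    (ha : HasDerivAt f1 a x.1) (hb : HasDerivAt f2 b x.2) : lap f x = a + b := by
  unfold lap
  have e1 : deriv (fun s => f (s, x.2)) =ᶠ[𝓝 x.1] f1 := h1.mono fun s hs => hs.deriv
  have e2 : deriv (fun s => f (x.1, s)) =ᶠ[𝓝 x.2] f2 := h2.mono fun s hs => hs.deriv
  rw [e1.deriv_eq, e2.deriv_eq, ha.deriv, hb.deriv]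

lemma dd_nonneg_of_isLocalMin {f : ℝ → ℝ} {x : ℝ} (hc : ContinuousAt f x)
    (h : IsLocalMin f x) : 0 ≤ deriv (deriv f) x := by
  by_contra! hneg
  have hmax := isLocalMax_of_deriv_deriv_neg hneg h.deriv_eq_zero hc
  have : f =ᶠ[𝓝 x] fun _ => f x := by
    filter_upwards [h, hmax] with y h1 h2 using le_antisymm h2 h1
  rw [this.deriv.deriv_eq] at hneg
  simp at hneg

lemma lap_nonneg_of_isLocalMin {f : ℝ × ℝ → ℝ} {x : ℝ × ℝ} (hc : ContDiffAt ℝ 2 f x)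
    (h : IsLocalMin f x) : 0 ≤ lap f x := by
  have c1 : Tendsto (fun s : ℝ => (s, x.2)) (𝓝 x.1) (𝓝 x) := by
    have : Continuous (fun s : ℝ => (s, x.2)) := by fun_prop
    exact this.tendsto' _ _ rfl
  have c2 : Tendsto (fun s : ℝ => (x.1, s)) (𝓝 x.2) (𝓝 x) := by
    have : Continuous (fun s : ℝ => (x.1, s)) := by fun_prop
    exact this.tendsto' _ _ rfl
  have h1 := dd_nonneg_of_isLocalMin (slice1_contDiffAt hc).continuousAt (c1.eventually h)
  have h2 := dd_nonneg_of_isLocalMin (slice2_contDiffAt hc).continuousAt (c2.eventually h)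
  exact add_nonneg h1 h2

/-- squared Euclidean distance -/
def d2 (p x : ℝ × ℝ) : ℝ := (x.1 - p.1) ^ 2 + (x.2 - p.2) ^ 2

lemma d2_nonneg (p x : ℝ × ℝ) : 0 ≤ d2 p x := by unfold d2; positivity

lemma d2_pos {p x : ℝ × ℝ} (h : x ≠ p) : 0 < d2 p x := by
  rcases (d2_nonneg p x).lt_or_eq with h' | h'
  · exact h'
  · exfalso; apply h
    unfold d2 at h'
    have a : (x.1 - p.1) ^ 2 = 0 := by nlinarith [sq_nonneg (x.1 - p.1), sq_nonneg (x.2 - p.2)]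
    have b : (x.2 - p.2) ^ 2 = 0 := by nlinarith [sq_nonneg (x.1 - p.1), sq_nonneg (x.2 - p.2)]
    rw [sq_eq_zero_iff, sub_eq_zero] at a b
    exact Prod.ext a b

lemma d2_self (p : ℝ × ℝ) : d2 p p = 0 := by simp [d2]

lemma continuous_d2 (p : ℝ × ℝ) : Continuous (d2 p) := by unfold d2; fun_prop

lemma contDiff_d2 (p : ℝ × ℝ) : ContDiff ℝ 2 (d2 p) := by unfold d2; fun_prop

lemma lap_d2 (p x : ℝ × ℝ) : lap (d2 p) x = 4 := by
  have : (4 : ℝ) = 2 + 2 := by norm_num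
  rw [this]
  apply lap_of_hasDerivAt (f1 := fun s => 2 * (s - p.1)) (f2 := fun s => 2 * (s - p.2))
  · refine Eventually.of_forall fun s => ?_
    have := (((hasDerivAt_id s).sub_const p.1).pow 2).add_const ((x.2 - p.2) ^ 2)
    simpa [d2] using this
  · refine Eventually.of_forall fun s => ?_
    have := (((hasDerivAt_id s).sub_const p.2).pow 2).const_add ((x.1 - p.1) ^ 2)
    simpa [d2] using this
  · simpa using ((hasDerivAt_id x.1).sub_const p.1).const_mul 2
  · simpa using ((hasDerivAt_id x.2).sub_const p.2).const_mul 2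

/-- Laplacian of `exp (a log |x-p|^2 + b log x_1)`. -/
lemma lap_exp_log (a b : ℝ) {x : ℝ × ℝ} (hx : x ≠ 0) (hb : b = 0 ∨ 0 < x.1) :
    lap (fun y => Real.exp (a * Real.log (y.1 ^ 2 + y.2 ^ 2) + b * Real.log y.1)) x =
      Real.exp (a * Real.log (x.1 ^ 2 + x.2 ^ 2) + b * Real.log x.1) *
      ((4 * a ^ 2 + 4 * a * b) / (x.1 ^ 2 + x.2 ^ 2) + (b ^ 2 - b) / x.1 ^ 2) := by
  have hr : 0 < x.1 ^ 2 + x.2 ^ 2 := by simpa [d2] using d2_pos hx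
  have q1 : ∀ s y : ℝ, s ^ 2 + y ^ 2 ≠ 0 → (b = 0 ∨ s ≠ 0) → HasDerivAt
      (fun s => a * Real.log (s ^ 2 + y ^ 2) + b * Real.log s)
      (a * (2 * s / (s ^ 2 + y ^ 2)) + b * s⁻¹) s := by
    intro s y h1 h2
    have A := ((((hasDerivAt_id s).pow 2).add_const (y ^ 2)).log (by simpa using h1)).const_mul a
    rcases h2 with h2 | h2
    · subst h2; simpa using A
    · simpa using A.fun_add ((Real.hasDerivAt_log h2).const_mul b)
  have q2 : ∀ s y : ℝ, y ^ 2 + s ^ 2 ≠ 0 → HasDerivAt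
      (fun s => a * Real.log (y ^ 2 + s ^ 2) + b * Real.log y)
      (a * (2 * s / (y ^ 2 + s ^ 2))) s := by
    intro s y h1
    have A := ((((hasDerivAt_id s).pow 2).const_add (y ^ 2)).log (by simpa using h1)).const_mul a
    simpa using A.add_const (b * Real.log y)
  have e1 : ∀ᶠ s in 𝓝 x.1, s ^ 2 + x.2 ^ 2 ≠ 0 := by
    have : ContinuousAt (fun s : ℝ => s ^ 2 + x.2 ^ 2) x.1 := by fun_prop
    exact this.eventually_ne hr.ne'
  have e2 : ∀ᶠ s in 𝓝 x.2, x.1 ^ 2 + s ^ 2 ≠ 0 := by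
    have : ContinuousAt (fun s : ℝ => x.1 ^ 2 + s ^ 2) x.2 := by fun_prop
    exact this.eventually_ne hr.ne'
  have e3 : ∀ᶠ s in 𝓝 x.1, b = 0 ∨ s ≠ 0 := by
    rcases hb with hb | hb
    · exact Eventually.of_forall fun s => Or.inl hb
    · filter_upwards [lt_mem_nhds hb] with s hs using Or.inr hs.ne'
  have hb' : b = 0 ∨ x.1 ≠ 0 := hb.imp id fun h => h.ne'
  have D1 : HasDerivAt (fun s => 2 * s / (s ^ 2 + x.2 ^ 2))
      ((2 * (x.1 ^ 2 + x.2 ^ 2) - 2 * x.1 * (2 * x.1)) / (x.1 ^ 2 + x.2 ^ 2) ^ 2) x.1 := by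
    have := ((hasDerivAt_id x.1).const_mul 2).fun_div (((hasDerivAt_id x.1).pow 2).add_const (x.2 ^ 2))
      (by simpa using hr.ne')
    simpa using this
  have D2 : HasDerivAt (fun s => 2 * s / (x.1 ^ 2 + s ^ 2))
      ((2 * (x.1 ^ 2 + x.2 ^ 2) - 2 * x.2 * (2 * x.2)) / (x.1 ^ 2 + x.2 ^ 2) ^ 2) x.2 := by
    have := ((hasDerivAt_id x.2).const_mul 2).fun_div (((hasDerivAt_id x.2).pow 2).const_add (x.1 ^ 2))
      (by simpa using hr.ne')
    simpa using this
  have D3 : HasDerivAt (fun s => b * s⁻¹) (b * (-(x.1 ^ 2)⁻¹)) x.1 := by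
    rcases hb' with h | h
    · subst h; simpa using hasDerivAt_const x.1 (0:ℝ)
    · exact (hasDerivAt_inv h).const_mul b
  have T1 := (q1 x.1 x.2 hr.ne' hb').exp.fun_mul ((D1.const_mul a).fun_add D3)
  have T2 := (q2 x.2 x.1 hr.ne').exp.fun_mul (D2.const_mul a)
  have := lap_of_hasDerivAt (f := fun y => Real.exp (a * Real.log (y.1 ^ 2 + y.2 ^ 2) + b * Real.log y.1))
    (x := x) (by filter_upwards [e1, e3] with s h1 h2 using (q1 s x.2 h1 h2).exp)
    (by filter_upwards [e2] with s h1 using (q2 s x.1 h1).exp) T1 T2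
  rw [this]
  rcases hb' with h | h
  · subst h
    simp only [zero_mul, add_zero, mul_zero]
    rw [show ((0:ℝ) ^ 2 - 0) / x.1 ^ 2 = 0 by simp]
    field_simp
    ring
  · field_simp
    ring

lemma contDiffAt_exp_log (a b : ℝ) {x : ℝ × ℝ} (hx : x ≠ 0) (hb : b = 0 ∨ 0 < x.1) :
    ContDiffAt ℝ 2 (fun y : ℝ × ℝ =>
      Real.exp (a * Real.log (y.1 ^ 2 + y.2 ^ 2) + b * Real.log y.1)) x := by
  have hr : 0 < x.1 ^ 2 + x.2 ^ 2 := by simpa [d2] using d2_pos hx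
  have h1 : ContDiffAt ℝ 2 (fun y : ℝ × ℝ => Real.log (y.1 ^ 2 + y.2 ^ 2)) x :=
    ContDiffAt.log (by fun_prop) hr.ne'
  rcases hb with h | h
  · subst h
    simpa using (contDiffAt_const.mul h1).exp
  · have h2 : ContDiffAt ℝ 2 (fun y : ℝ × ℝ => Real.log y.1) x :=
      ContDiffAt.log (by fun_prop) h.ne'
    exact ((contDiffAt_const.mul h1).add (contDiffAt_const.mul h2)).exp

lemma lap_log_d2 {p x : ℝ × ℝ} (hx : x ≠ p) : lap (fun y => Real.log (d2 p y)) x = 0 := by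
  have hr : 0 < (x.1 - p.1) ^ 2 + (x.2 - p.2) ^ 2 := d2_pos hx
  have q1 : ∀ s y : ℝ, (s - p.1) ^ 2 + y ^ 2 ≠ 0 → HasDerivAt
      (fun s => Real.log ((s - p.1) ^ 2 + y ^ 2))
      (2 * (s - p.1) / ((s - p.1) ^ 2 + y ^ 2)) s := by
    intro s y h1
    simpa using ((((hasDerivAt_id s).sub_const p.1).pow 2).add_const (y ^ 2)).log (by simpa using h1)
  have q2 : ∀ s y : ℝ, y ^ 2 + (s - p.2) ^ 2 ≠ 0 → HasDerivAt
      (fun s => Real.log (y ^ 2 + (s - p.2) ^ 2))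
      (2 * (s - p.2) / (y ^ 2 + (s - p.2) ^ 2)) s := by
    intro s y h1
    simpa using ((((hasDerivAt_id s).sub_const p.2).pow 2).const_add (y ^ 2)).log (by simpa using h1)
  have e1 : ∀ᶠ s in 𝓝 x.1, (s - p.1) ^ 2 + (x.2 - p.2) ^ 2 ≠ 0 := by
    have : ContinuousAt (fun s : ℝ => (s - p.1) ^ 2 + (x.2 - p.2) ^ 2) x.1 := by fun_prop
    exact this.eventually_ne hr.ne'
  have e2 : ∀ᶠ s in 𝓝 x.2, (x.1 - p.1) ^ 2 + (s - p.2) ^ 2 ≠ 0 := by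
    have : ContinuousAt (fun s : ℝ => (x.1 - p.1) ^ 2 + (s - p.2) ^ 2) x.2 := by fun_prop
    exact this.eventually_ne hr.ne'
  have D1 := ((((hasDerivAt_id x.1).sub_const p.1).const_mul 2).fun_div
    ((((hasDerivAt_id x.1).sub_const p.1).pow 2).add_const ((x.2 - p.2) ^ 2)) (by simpa using hr.ne'))
  have D2 := ((((hasDerivAt_id x.2).sub_const p.2).const_mul 2).fun_div
    ((((hasDerivAt_id x.2).sub_const p.2).pow 2).const_add ((x.1 - p.1) ^ 2)) (by simpa using hr.ne'))
  have := lap_of_hasDerivAt (f := fun y => Real.log (d2 p y)) (x := x)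
    (f1 := fun s => 2 * (s - p.1) / ((s - p.1) ^ 2 + (x.2 - p.2) ^ 2))
    (f2 := fun s => 2 * (s - p.2) / ((x.1 - p.1) ^ 2 + (s - p.2) ^ 2))
    (by filter_upwards [e1] with s h using q1 s _ h)
    (by filter_upwards [e2] with s h using q2 s _ h) (by simpa using D1) (by simpa using D2)
  rw [this]
  field_simp
  ring

lemma contDiffAt_log_d2 {p x : ℝ × ℝ} (hx : x ≠ p) :
    ContDiffAt ℝ 2 (fun y => Real.log (d2 p y)) x :=
  ContDiffAt.log (contDiff_d2 p).contDiffAt (d2_pos hx).ne'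

/-- Weak minimum principle on compact sets. -/
lemma weak_min_principle {K : Set (ℝ × ℝ)} (hK : IsCompact K) {f : ℝ × ℝ → ℝ}
    (hf : ContinuousOn f K)
    (h : ∀ x ∈ K, 0 ≤ f x ∨ (K ∈ 𝓝 x ∧ ContDiffAt ℝ 2 f x ∧ lap f x ≤ 0)) :
    ∀ x ∈ K, 0 ≤ f x := by
  intro x hx
  obtain ⟨C, hC⟩ := hK.exists_bound_of_continuousOn (continuous_d2 0).continuousOn
  have key : ∀ ε > 0, 0 ≤ f x + ε * C := by
    intro ε hε
    have hc : ContinuousOn (fun y => f y + -(ε) * d2 0 y) K :=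
      hf.add (continuousOn_const.mul (continuous_d2 0).continuousOn)
    obtain ⟨y, hy, hmin⟩ := hK.exists_isMinOn ⟨x, hx⟩ hc
    have h1 : f y + -ε * d2 0 y ≤ f x + -ε * d2 0 x := hmin hx
    have h2 := d2_nonneg 0 x
    have h3 : d2 0 y ≤ C := (le_abs_self _).trans (hC y hy)
    rcases h y hy with h0 | ⟨hn, hcd, hl⟩
    · nlinarith
    · exfalso
      have hcd2 : ContDiffAt ℝ 2 (fun y => -ε * d2 0 y) y :=
        contDiffAt_const.mul (contDiff_d2 0).contDiffAt
      have := lap_nonneg_of_isLocalMin (hcd.add hcd2) (hmin.isLocalMin hn)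
      have e := lap_add hcd hcd2
      rw [lap_const_mul, lap_d2] at e
      have : 0 ≤ lap (fun y => f y + -ε * d2 0 y) y := this
      linarith
  by_contra! hneg
  have hC0 : 0 ≤ C := (abs_nonneg _).trans (hC x hx)
  have := key (-f x / (2 * (C + 1))) (by apply div_pos <;> linarith)
  have e : -f x / (2 * (C + 1)) * C ≤ -f x / 2 := by
    rw [div_mul_eq_mul_div, div_le_div_iff₀ (by linarith) (by norm_num)]
    nlinarith
  linarith

lemma isCompact_disc (p : ℝ × ℝ) (R : ℝ) : IsCompact {x | d2 p x ≤ R} := by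
  apply Metric.isCompact_of_isClosed_isBounded
  · exact isClosed_le (continuous_d2 p) continuous_const
  · apply (Metric.isBounded_closedBall (x := p) (r := 1 + R)).subset
    intro x hx
    simp only [mem_ofPred_eq, d2] at hx
    rw [Metric.mem_closedBall, Prod.dist_eq, Real.dist_eq, Real.dist_eq]
    apply max_le <;> apply abs_le.2 <;> constructor <;>
      nlinarith [sq_nonneg (x.1 - p.1), sq_nonneg (x.2 - p.2), sq_nonneg (x.1 - p.1 - 1),
        sq_nonneg (x.1 - p.1 + 1), sq_nonneg (x.2 - p.2 + 1), sq_nonneg (x.2 - p.2 - 1)]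

/-- logarithmic lower barrier in an annulus -/
lemma annulus_barrier {p : ℝ × ℝ} {a b m : ℝ} (ha : 0 < a) (hab : a < b) (hm : 0 ≤ m)
    {z : ℝ × ℝ → ℝ} (hz : ContinuousOn z {x | a ≤ d2 p x ∧ d2 p x ≤ b})
    (h0 : ∀ x, d2 p x = b → 0 ≤ z x) (h1 : ∀ x, d2 p x = a → m ≤ z x)
    (hl : ∀ x, a < d2 p x → d2 p x < b → ContDiffAt ℝ 2 z x ∧ lap z x ≤ 0) :
    ∀ x, a ≤ d2 p x → d2 p x ≤ b →
      m / Real.log (b / a) * (Real.log b - Real.log (d2 p x)) ≤ z x := by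
  set c := m / Real.log (b / a)
  have hlog : 0 < Real.log (b / a) := Real.log_pos (by rwa [lt_div_iff₀ ha, one_mul])
  have hlog' : Real.log (b / a) = Real.log b - Real.log a :=
    Real.log_div (by linarith) (by linarith)
  have hcm : c * (Real.log b - Real.log a) = m := by
    rw [← hlog']; exact div_mul_cancel₀ _ hlog.ne'
  have hK : IsCompact {x | a ≤ d2 p x ∧ d2 p x ≤ b} :=
    (isCompact_disc p b).of_isClosed_subset
      ((isClosed_le continuous_const (continuous_d2 p)).inter
        (isClosed_le (continuous_d2 p) continuous_const)) fun x hx => hx.2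
  have := weak_min_principle hK
    (f := fun x => z x + (c * Real.log (d2 p x) + -(c * Real.log b)))
    (hz.add ((continuousOn_const.mul ((continuous_d2 p).continuousOn.log
      fun x hx => (ha.trans_le hx.1).ne')).add continuousOn_const)) ?_
  · intro x h1 h2
    have := this x ⟨h1, h2⟩
    linarith
  · rintro x ⟨hx1, hx2⟩
    rcases hx1.lt_or_eq with hx1 | hx1
    · rcases hx2.lt_or_eq with hx2 | hx2
      · right
        have hxp : x ≠ p := by rintro rfl; rw [d2_self] at hx1; linarith
        refine ⟨?_, ?_, ?_⟩
        · filter_upwards [(isOpen_lt continuous_const (continuous_d2 p)).mem_nhds hx1,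
            (isOpen_lt (continuous_d2 p) continuous_const).mem_nhds hx2] with y h1 h2
          exact ⟨le_of_lt h1, le_of_lt h2⟩
        · exact (hl x hx1 hx2).1.add ((contDiffAt_const.mul (contDiffAt_log_d2 hxp)).add
            contDiffAt_const)
        · have e1 : ContDiffAt ℝ 2 (fun y => c * Real.log (d2 p y)) x :=
            contDiffAt_const.mul (contDiffAt_log_d2 hxp)
          have e2 : ContDiffAt ℝ 2 (fun y : ℝ × ℝ => -(c * Real.log b)) x := contDiffAt_const
          rw [lap_add (hl x hx1 hx2).1 (e1.add e2), lap_add e1 e2, lap_const, lap_const_mul,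
            lap_log_d2 hxp]
          have := (hl x hx1 hx2).2
          linarith
      · left
        rw [hx2]
        have := h0 x hx2
        linarith
    · left
      rw [← hx1]
      have := h1 x hx1.symm
      linarith

open Filter Topology

lemma hasDerivAt_param_integral (G G' : ℝ → ℝ → ℝ) (L : ℝ)
    (hG : ∀ s < L, ∀ θ, HasDerivAt (fun s => G s θ) (G' s θ) s)
    (hc : ContinuousOn (fun q : ℝ × ℝ => G q.1 q.2) (Iio L ×ˢ univ))
    (hc' : ContinuousOn (fun q : ℝ × ℝ => G' q.1 q.2) (Iio L ×ˢ univ)) {s : ℝ} (hs : s < L) :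
    HasDerivAt (fun s => ∫ θ in (-Real.pi)..Real.pi, G s θ)
      (∫ θ in (-Real.pi)..Real.pi, G' s θ) s := by
  have hslice : ∀ t < L, Continuous (fun θ => G t θ) := fun t ht => by
    have : Continuous (fun θ : ℝ => (t, θ)) := by fun_prop
    exact hc.comp_continuous this fun θ => ⟨ht, trivial⟩
  have hslice' : ∀ t < L, Continuous (fun θ => G' t θ) := fun t ht => by
    have : Continuous (fun θ : ℝ => (t, θ)) := by fun_prop
    exact hc'.comp_continuous this fun θ => ⟨ht, trivial⟩
  obtain ⟨δ, hδ0, hδ⟩ : ∃ δ > 0, s + δ < L := ⟨(L - s) / 2, by linarith, by linarith⟩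
  have hK : IsCompact (Icc (s - δ) (s + δ) ×ˢ Icc (-Real.pi) Real.pi) :=
    isCompact_Icc.prod isCompact_Icc
  obtain ⟨C, hC⟩ := hK.exists_bound_of_continuousOn
    (hc'.mono (prod_mono (fun t ht => lt_of_le_of_lt ht.2 hδ) (subset_univ _)))
  have hpi : -Real.pi ≤ Real.pi := by linarith [Real.pi_pos]
  refine (intervalIntegral.hasDerivAt_integral_of_dominated_loc_of_deriv_le
    (s := Icc (s - δ) (s + δ)) (bound := fun _ => C)
    (Icc_mem_nhds (by linarith) (by linarith)) ?_ ?_ ?_ ?_ ?_ ?_).2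
  · filter_upwards [Iio_mem_nhds hs] with t ht
    exact (hslice t ht).aestronglyMeasurable
  · exact (hslice s hs).intervalIntegrable _ _
  · exact (hslice' s hs).aestronglyMeasurable
  · refine Eventually.of_forall fun θ hθ t ht => ?_
    rw [uIoc_of_le hpi] at hθ
    exact hC (t, θ) ⟨ht, hθ.1.le, hθ.2⟩
  · exact intervalIntegrable_const
  · refine Eventually.of_forall fun θ hθ t ht => ?_
    exact hG t (lt_of_le_of_lt ht.2 hδ) θ

/-- A function with nonneg second derivative on a left half line which has a finite limit at `-∞`
stays above the limit. -/
lemma ge_limit_of_convex {ψ ψ' ψ'' : ℝ → ℝ} {L c : ℝ}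
    (h1 : ∀ s < L, HasDerivAt ψ (ψ' s) s) (h2 : ∀ s < L, HasDerivAt ψ' (ψ'' s) s)
    (h3 : ∀ s < L, 0 ≤ ψ'' s) (hlim : Tendsto ψ atBot (𝓝 c)) : ∀ s < L, c ≤ ψ s := by
  have mono' : MonotoneOn ψ' (Iio L) := by
    apply monotoneOn_of_deriv_nonneg (convex_Iio L)
    · exact fun s hs => (h2 s hs).continuousAt.continuousWithinAt
    · rw [interior_Iio]; exact fun s hs => (h2 s hs).differentiableAt.differentiableWithinAt
    · rw [interior_Iio]; exact fun s hs => by rw [(h2 s hs).deriv]; exact h3 s hs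
  have pos : ∀ s < L, 0 ≤ ψ' s := by
    intro s0 hs0
    by_contra! hneg
    have anti : AntitoneOn (fun t => ψ t - ψ' s0 * t) (Iic s0) := by
      apply antitoneOn_of_deriv_nonpos (convex_Iic s0)
      · exact fun s hs => ((h1 s (lt_of_le_of_lt hs hs0)).sub
          ((hasDerivAt_id s).const_mul (ψ' s0))).continuousAt.continuousWithinAt
      · rw [interior_Iic]
        exact fun s hs => ((h1 s (lt_trans hs hs0)).sub
          ((hasDerivAt_id s).const_mul (ψ' s0))).differentiableAt.differentiableWithinAt
      · rw [interior_Iic]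
        intro s hs
        have := ((h1 s (lt_trans hs hs0)).fun_sub ((hasDerivAt_id s).const_mul (ψ' s0))).deriv
        simp only [id] at this
        rw [this]
        have := mono' (lt_trans hs hs0) hs0 (le_of_lt hs)
        linarith
    have hinf : Tendsto (fun t => ψ' s0 * t + (ψ s0 - ψ' s0 * s0)) atBot atTop :=
      tendsto_atTop_add_const_right _ _ (tendsto_id.const_mul_atBot_of_neg hneg)
    have hψ : Tendsto ψ atBot atTop := by
      refine tendsto_atTop_mono' _ ?_ hinf
      filter_upwards [eventually_le_atBot s0] with t ht
      have := anti ht (le_refl s0) ht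
      simp only at this
      linarith
    exact not_tendsto_nhds_of_tendsto_atTop hψ c hlim
  have mono : MonotoneOn ψ (Iio L) := by
    apply monotoneOn_of_deriv_nonneg (convex_Iio L)
    · exact fun s hs => (h1 s hs).continuousAt.continuousWithinAt
    · rw [interior_Iio]; exact fun s hs => (h1 s hs).differentiableAt.differentiableWithinAt
    · rw [interior_Iio]; exact fun s hs => by rw [(h1 s hs).deriv]; exact pos s hs
  intro s hs
  refine le_of_tendsto hlim ?_
  filter_upwards [eventually_le_atBot s] with t ht
  exact mono (lt_of_le_of_lt ht hs) hs ht

/-- log-polar coordinates -/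
noncomputable def lgp (p : ℝ × ℝ) (s θ : ℝ) : ℝ × ℝ :=
  (p.1 + Real.exp s * Real.cos θ, p.2 + Real.exp s * Real.sin θ)

lemma lgp_deriv_s (p : ℝ × ℝ) (s θ : ℝ) : HasDerivAt (fun s => lgp p s θ)
    (Real.exp s * Real.cos θ, Real.exp s * Real.sin θ) s := by
  unfold lgp
  exact (((Real.hasDerivAt_exp s).mul_const _).const_add _).prodMk
    (((Real.hasDerivAt_exp s).mul_const _).const_add _)

lemma lgp_deriv_θ (p : ℝ × ℝ) (s θ : ℝ) : HasDerivAt (fun θ => lgp p s θ)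
    (-(Real.exp s * Real.sin θ), Real.exp s * Real.cos θ) θ := by
  unfold lgp
  have h1 := ((Real.hasDerivAt_cos θ).const_mul (Real.exp s)).const_add p.1
  have h2 := ((Real.hasDerivAt_sin θ).const_mul (Real.exp s)).const_add p.2
  rw [mul_neg] at h1
  exact h1.prodMk h2

lemma d2_lgp (p : ℝ × ℝ) (s θ : ℝ) : d2 p (lgp p s θ) = Real.exp s ^ 2 := by
  simp only [d2, lgp]
  linear_combination (Real.exp s ^ 2) * Real.sin_sq_add_cos_sq θ

lemma hasDerivAt_comp_curve {f : ℝ × ℝ → ℝ} {γ : ℝ → ℝ × ℝ} {t a b : ℝ}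
    (hf : DifferentiableAt ℝ f (γ t)) (hγ : HasDerivAt γ (a, b) t) :
    HasDerivAt (fun t => f (γ t)) (fderiv ℝ f (γ t) (1, 0) * a + fderiv ℝ f (γ t) (0, 1) * b) t := by
  have := hf.hasFDerivAt.comp_hasDerivAt t hγ
  have e : ((a, b) : ℝ × ℝ) = a • ((1, 0) : ℝ × ℝ) + b • ((0, 1) : ℝ × ℝ) := by simp
  rw [e, map_add, map_smul, map_smul, smul_eq_mul, smul_eq_mul, mul_comm a, mul_comm b] at this
  exact this

/-- Circle mean inequality. -/
lemma circle_mean {z : ℝ × ℝ → ℝ} {p : ℝ × ℝ} {τ : ℝ} (hτ : 0 < τ) (hc : ContinuousAt z p)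
    (h2 : ∀ x, x ≠ p → d2 p x < τ ^ 2 → ContDiffAt ℝ 2 z x ∧ 0 ≤ lap z x) :
    ∀ s < Real.log τ, 2 * Real.pi * z p ≤ ∫ θ in (-Real.pi)..Real.pi, z (lgp p s θ) := by
  set Ω : Set (ℝ × ℝ) := {x | x ≠ p ∧ d2 p x < τ ^ 2}
  have hΩ : IsOpen Ω := isOpen_ne.inter (isOpen_lt (continuous_d2 p) continuous_const)
  have hin : ∀ s < Real.log τ, ∀ θ, lgp p s θ ∈ Ω := by
    intro s hs θ
    have hd := d2_lgp p s θ
    have he := Real.exp_pos s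
    refine ⟨?_, ?_⟩
    · intro h; rw [h, d2_self] at hd; exact absurd hd.symm (by positivity)
    · rw [hd]
      have : Real.exp s < τ := by rwa [← Real.lt_log_iff_exp_lt hτ]
      gcongr
  have hCD : ContDiffOn ℝ 2 z Ω := fun x hx => (h2 x hx.1 hx.2).1.contDiffWithinAt
  have hfd : ContDiffOn ℝ 1 (fderiv ℝ z) Ω := hCD.fderiv_of_isOpen hΩ (by norm_num)
  set zx : ℝ × ℝ → ℝ := fun x => fderiv ℝ z x (1, 0) with hzx
  set zy : ℝ × ℝ → ℝ := fun x => fderiv ℝ z x (0, 1) with hzy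
  have hzxC : ContDiffOn ℝ 1 zx Ω := hfd.clm_apply contDiffOn_const
  have hzyC : ContDiffOn ℝ 1 zy Ω := hfd.clm_apply contDiffOn_const
  have hzd : ∀ x ∈ Ω, DifferentiableAt ℝ z x := fun x hx =>
    (hCD.contDiffAt (hΩ.mem_nhds hx)).differentiableAt (by norm_num)
  have hxd : ∀ x ∈ Ω, DifferentiableAt ℝ zx x := fun x hx =>
    (hzxC.contDiffAt (hΩ.mem_nhds hx)).differentiableAt (by norm_num)
  have hyd : ∀ x ∈ Ω, DifferentiableAt ℝ zy x := fun x hx =>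
    (hzyC.contDiffAt (hΩ.mem_nhds hx)).differentiableAt (by norm_num)
  have hx2 : ContinuousOn (fderiv ℝ zx) Ω := hzxC.continuousOn_fderiv_of_isOpen hΩ (by norm_num)
  have hy2 : ContinuousOn (fderiv ℝ zy) Ω := hzyC.continuousOn_fderiv_of_isOpen hΩ (by norm_num)
  -- the Laplacian
  have hlap : ∀ x ∈ Ω, lap z x = fderiv ℝ zx x (1, 0) + fderiv ℝ zy x (0, 1) := by
    intro x hx
    have k1 : ∀ t : ℝ, HasDerivAt (fun s : ℝ => (s, x.2)) (1, 0) t := fun t =>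
      (hasDerivAt_id t).prodMk (hasDerivAt_const t x.2)
    have k2 : ∀ t : ℝ, HasDerivAt (fun s : ℝ => (x.1, s)) (0, 1) t := fun t =>
      (hasDerivAt_const t x.1).prodMk (hasDerivAt_id t)
    have c1 : Tendsto (fun s : ℝ => (s, x.2)) (𝓝 x.1) (𝓝 x) :=
      (k1 x.1).continuousAt
    have c2 : Tendsto (fun s : ℝ => (x.1, s)) (𝓝 x.2) (𝓝 x) :=
      (k2 x.2).continuousAt
    apply lap_of_hasDerivAt (f1 := fun s => zx (s, x.2)) (f2 := fun s => zy (x.1, s))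
    · filter_upwards [c1.eventually (hΩ.mem_nhds hx)] with s hs
      simpa using hasDerivAt_comp_curve (γ := fun s => (s, x.2)) (hzd _ hs) (k1 s)
    · filter_upwards [c2.eventually (hΩ.mem_nhds hx)] with s hs
      simpa using hasDerivAt_comp_curve (γ := fun s => (x.1, s)) (hzd _ hs) (k2 s)
    · simpa using hasDerivAt_comp_curve (f := zx) (t := x.1) (hxd _ hx) (k1 x.1)
    · simpa using hasDerivAt_comp_curve (f := zy) (t := x.2) (hyd _ hx) (k2 x.2)
  set A1 : ℝ → ℝ → ℝ := fun s θ => zx (lgp p s θ) * (Real.exp s * Real.cos θ)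
    + zy (lgp p s θ) * (Real.exp s * Real.sin θ) with hA1
  set A2 : ℝ → ℝ → ℝ := fun s θ =>
    (fderiv ℝ zx (lgp p s θ) (1, 0) * (Real.exp s * Real.cos θ)
      + fderiv ℝ zx (lgp p s θ) (0, 1) * (Real.exp s * Real.sin θ)) * (Real.exp s * Real.cos θ)
    + zx (lgp p s θ) * (Real.exp s * Real.cos θ)
    + ((fderiv ℝ zy (lgp p s θ) (1, 0) * (Real.exp s * Real.cos θ)
      + fderiv ℝ zy (lgp p s θ) (0, 1) * (Real.exp s * Real.sin θ)) * (Real.exp s * Real.sin θ)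
    + zy (lgp p s θ) * (Real.exp s * Real.sin θ)) with hA2
  set B1 : ℝ → ℝ → ℝ := fun s θ => zx (lgp p s θ) * (-(Real.exp s * Real.sin θ))
    + zy (lgp p s θ) * (Real.exp s * Real.cos θ) with hB1
  set B2 : ℝ → ℝ → ℝ := fun s θ =>
    (fderiv ℝ zx (lgp p s θ) (1, 0) * (-(Real.exp s * Real.sin θ))
      + fderiv ℝ zx (lgp p s θ) (0, 1) * (Real.exp s * Real.cos θ)) * (-(Real.exp s * Real.sin θ))
    + zx (lgp p s θ) * (-(Real.exp s * Real.cos θ))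
    + ((fderiv ℝ zy (lgp p s θ) (1, 0) * (-(Real.exp s * Real.sin θ))
      + fderiv ℝ zy (lgp p s θ) (0, 1) * (Real.exp s * Real.cos θ)) * (Real.exp s * Real.cos θ)
    + zy (lgp p s θ) * (Real.exp s * (-Real.sin θ))) with hB2
  have hH : ∀ s < Real.log τ, ∀ θ, HasDerivAt (fun s => z (lgp p s θ)) (A1 s θ) s :=
    fun s hs θ => hasDerivAt_comp_curve (hzd _ (hin s hs θ)) (lgp_deriv_s p s θ)
  have hHθ : ∀ s < Real.log τ, ∀ θ, HasDerivAt (fun θ => B1 s θ) (B2 s θ) θ := by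
    intro s hs θ
    have e1 := hasDerivAt_comp_curve (f := zx) (hxd _ (hin s hs θ)) (lgp_deriv_θ p s θ)
    have e2 := hasDerivAt_comp_curve (f := zy) (hyd _ (hin s hs θ)) (lgp_deriv_θ p s θ)
    exact (e1.fun_mul ((Real.hasDerivAt_sin θ).const_mul (Real.exp s)).fun_neg).fun_add
      (e2.fun_mul ((Real.hasDerivAt_cos θ).const_mul (Real.exp s)))
  have hHss : ∀ s < Real.log τ, ∀ θ, HasDerivAt (fun s => A1 s θ) (A2 s θ) s := by
    intro s hs θ
    have e1 := hasDerivAt_comp_curve (f := zx) (γ := fun s => lgp p s θ) (hxd _ (hin s hs θ))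
      (lgp_deriv_s p s θ)
    have e2 := hasDerivAt_comp_curve (f := zy) (γ := fun s => lgp p s θ) (hyd _ (hin s hs θ))
      (lgp_deriv_s p s θ)
    exact (e1.fun_mul ((Real.hasDerivAt_exp s).mul_const (Real.cos θ))).fun_add
      (e2.fun_mul ((Real.hasDerivAt_exp s).mul_const (Real.sin θ)))
  have hlpc : ContinuousOn (fun q : ℝ × ℝ => lgp p q.1 q.2) (Iio (Real.log τ) ×ˢ univ) := by
    unfold lgp; fun_prop
  have hmaps : MapsTo (fun q : ℝ × ℝ => lgp p q.1 q.2) (Iio (Real.log τ) ×ˢ univ) Ω :=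
    fun q hq => hin q.1 hq.1 q.2
  have C0 := hCD.continuousOn.comp hlpc hmaps
  have Cx := hzxC.continuousOn.comp hlpc hmaps
  have Cy := hzyC.continuousOn.comp hlpc hmaps
  have Cxv : ∀ v : ℝ × ℝ, ContinuousOn (fun q : ℝ × ℝ => fderiv ℝ zx (lgp p q.1 q.2) v)
      (Iio (Real.log τ) ×ˢ univ) := fun v => (hx2.comp hlpc hmaps).clm_apply continuousOn_const
  have Cyv : ∀ v : ℝ × ℝ, ContinuousOn (fun q : ℝ × ℝ => fderiv ℝ zy (lgp p q.1 q.2) v)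
      (Iio (Real.log τ) ×ˢ univ) := fun v => (hy2.comp hlpc hmaps).clm_apply continuousOn_const
  have Cc : ContinuousOn (fun q : ℝ × ℝ => Real.exp q.1 * Real.cos q.2)
      (Iio (Real.log τ) ×ˢ univ) := by fun_prop
  have Cs : ContinuousOn (fun q : ℝ × ℝ => Real.exp q.1 * Real.sin q.2)
      (Iio (Real.log τ) ×ˢ univ) := by fun_prop
  have CA1 : ContinuousOn (fun q : ℝ × ℝ => A1 q.1 q.2) (Iio (Real.log τ) ×ˢ univ) :=
    (Cx.mul Cc).add (Cy.mul Cs)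
  have CA2 : ContinuousOn (fun q : ℝ × ℝ => A2 q.1 q.2) (Iio (Real.log τ) ×ˢ univ) :=
    (((((Cxv _).mul Cc).add ((Cxv _).mul Cs)).mul Cc).add (Cx.mul Cc)).add
      (((((Cyv _).mul Cc).add ((Cyv _).mul Cs)).mul Cs).add (Cy.mul Cs))
  have Cs' : ContinuousOn (fun q : ℝ × ℝ => Real.exp q.1 * -Real.sin q.2)
      (Iio (Real.log τ) ×ˢ univ) := by fun_prop
  have CB2 : ContinuousOn (fun q : ℝ × ℝ => B2 q.1 q.2) (Iio (Real.log τ) ×ˢ univ) :=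
    (((((Cxv _).mul Cs.neg).add ((Cxv _).mul Cc)).mul Cs.neg).add (Cx.mul Cc.neg)).add
      (((((Cyv _).mul Cs.neg).add ((Cyv _).mul Cc)).mul Cc).add (Cy.mul Cs'))
  have slice : ∀ F : ℝ → ℝ → ℝ, ContinuousOn (fun q : ℝ × ℝ => F q.1 q.2)
      (Iio (Real.log τ) ×ˢ univ) → ∀ s < Real.log τ, Continuous (fun θ => F s θ) := by
    intro F hF s hs
    have : Continuous (fun θ : ℝ => (s, θ)) := by fun_prop
    exact hF.comp_continuous this fun θ => ⟨hs, trivial⟩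
  refine ge_limit_of_convex
    (hasDerivAt_param_integral (fun s θ => z (lgp p s θ)) A1 _ hH C0 CA1 (s := ·))
    (hasDerivAt_param_integral A1 A2 _ hHss CA1 CA2 (s := ·)) ?_ ?_
  · intro s hs
    have hpi : -Real.pi ≤ Real.pi := by linarith [Real.pi_pos]
    have iA := (slice A2 CA2 s hs).intervalIntegrable (μ := volume) (-Real.pi) Real.pi
    have iB := (slice B2 CB2 s hs).intervalIntegrable (μ := volume) (-Real.pi) Real.pi
    have hB0 : ∫ θ in (-Real.pi)..Real.pi, B2 s θ = 0 := by
      rw [intervalIntegral.integral_eq_sub_of_hasDerivAt (fun θ _ => hHθ s hs θ) iB]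
      simp [hB1, lgp]
    have hsum : 0 ≤ ∫ θ in (-Real.pi)..Real.pi, (A2 s θ + B2 s θ) := by
      apply intervalIntegral.integral_nonneg hpi
      intro θ _
      have hm := hin s hs θ
      have e : A2 s θ + B2 s θ = Real.exp s ^ 2 * lap z (lgp p s θ) := by
        rw [hlap _ hm]
        simp only [hA2, hB2]
        linear_combination (Real.exp s ^ 2) * (fderiv ℝ zx (lgp p s θ) (1, 0) +
          fderiv ℝ zy (lgp p s θ) (0, 1)) * Real.sin_sq_add_cos_sq θ
      rw [e]
      exact mul_nonneg (by positivity) (h2 _ hm.1 hm.2).2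
    rw [intervalIntegral.integral_add iA iB, hB0, add_zero] at hsum
    exact hsum
  · -- limit
    rw [Metric.tendsto_nhds]
    intro ε hε
    have hpi : -Real.pi ≤ Real.pi := by linarith [Real.pi_pos]
    have hev : ∀ᶠ x in 𝓝 p, dist (z x) (z p) < ε / (4 * Real.pi) :=
      Metric.tendsto_nhds.1 hc _ (by positivity)
    obtain ⟨δ, hδ, hball⟩ := Metric.eventually_nhds_iff.1 hev
    filter_upwards [(Real.tendsto_exp_atBot).eventually (gt_mem_nhds hδ),
      eventually_lt_atBot (Real.log τ)] with s hs hsL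
    have hIntg := (slice (fun s θ => z (lgp p s θ)) C0 s hsL).intervalIntegrable
      (μ := volume) (-Real.pi) Real.pi
    have hconst : 2 * Real.pi * z p = ∫ θ in (-Real.pi)..Real.pi, z p := by
      rw [intervalIntegral.integral_const, smul_eq_mul]; ring
    rw [hconst, Real.dist_eq, ← intervalIntegral.integral_sub hIntg intervalIntegrable_const]
    have := intervalIntegral.norm_integral_le_of_norm_le_const (a := -Real.pi) (b := Real.pi)
      (f := fun θ => z (lgp p s θ) - z p) (C := ε / (4 * Real.pi)) ?_
    · refine lt_of_le_of_lt this ?_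
      rw [show Real.pi - -Real.pi = 2 * Real.pi by ring, abs_of_pos (by positivity)]
      have : ε / (4 * Real.pi) * (2 * Real.pi) = ε / 2 := by field_simp; ring
      linarith
    · intro θ _
      apply le_of_lt
      apply hball
      simp only [lgp, Prod.dist_eq, Real.dist_eq]
      have hes := Real.exp_pos s
      apply max_lt
      · rw [add_sub_cancel_left, abs_mul, abs_of_pos hes]
        nlinarith [Real.abs_cos_le_one θ, abs_nonneg (Real.cos θ)]
      · rw [add_sub_cancel_left, abs_mul, abs_of_pos hes]
        nlinarith [Real.abs_sin_le_one θ, abs_nonneg (Real.sin θ)]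

open Filter Topology

lemma lgp_log {p : ℝ × ℝ} {r θ : ℝ} (hr : 0 < r) :
    lgp p (Real.log r) θ = (p.1 + r * Real.cos θ, p.2 + r * Real.sin θ) := by
  simp [lgp, Real.exp_log hr]

/-- polar coordinates for disc integrals -/
lemma disc_integral_polar {z : ℝ × ℝ → ℝ} {p : ℝ × ℝ} {τ : ℝ}
    (hc : ContinuousOn z {x | d2 p x ≤ τ ^ 2}) (hτ : 0 < τ) :
    ∫ x in {x | d2 p x < τ ^ 2}, z x =
      ∫ r in Ioo 0 τ, ∫ θ in (-Real.pi)..Real.pi,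
        r * z (p.1 + r * Real.cos θ, p.2 + r * Real.sin θ) := by
  have hmeas : MeasurableSet {x | d2 p x < τ ^ 2} :=
    (isOpen_lt (continuous_d2 p) continuous_const).measurableSet
  rw [← integral_indicator hmeas]
  set F : ℝ × ℝ → ℝ := indicator {x | d2 p x < τ ^ 2} z with hF
  have h1 : ∫ x, F x = ∫ x, F (x + p) := (integral_add_right_eq_self F p).symm
  rw [h1, ← integral_comp_polarCoord_symm (fun x => F (x + p))]
  have h2 : ∫ q in polarCoord.target, q.1 • F (polarCoord.symm q + p) =
      ∫ q in polarCoord.target, indicator (Ioo 0 τ ×ˢ Ioo (-Real.pi) Real.pi)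
        (fun q : ℝ × ℝ => q.1 * z (p.1 + q.1 * Real.cos q.2, p.2 + q.1 * Real.sin q.2)) q := by
    apply setIntegral_congr_fun polarCoord.open_target.measurableSet
    rintro ⟨r, θ⟩ hq
    simp only [polarCoord_target, mem_prod, mem_Ioi] at hq
    have e : polarCoord.symm (r, θ) + p = (p.1 + r * Real.cos θ, p.2 + r * Real.sin θ) := by
      simp [polarCoord_symm_apply, Prod.ext_iff, add_comm]
    have ed : d2 p (p.1 + r * Real.cos θ, p.2 + r * Real.sin θ) = r ^ 2 := by
      simp only [d2]; linear_combination (r ^ 2) * Real.sin_sq_add_cos_sq θ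
    simp only [e, hF]
    by_cases hr : r < τ
    · have m1 : (p.1 + r * Real.cos θ, p.2 + r * Real.sin θ) ∈ {x | d2 p x < τ ^ 2} := by
        show d2 p _ < τ ^ 2
        rw [ed]; have := hq.1; gcongr
      have m2 : (r, θ) ∈ Ioo 0 τ ×ˢ Ioo (-Real.pi) Real.pi := ⟨⟨hq.1, hr⟩, hq.2⟩
      rw [indicator_of_mem m1, indicator_of_mem m2, smul_eq_mul]
    · have m1 : (p.1 + r * Real.cos θ, p.2 + r * Real.sin θ) ∉ {x | d2 p x < τ ^ 2} := by
        show ¬ (d2 p _ < τ ^ 2)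
        rw [ed]; push Not at hr ⊢; gcongr
      have m2 : (r, θ) ∉ Ioo 0 τ ×ˢ Ioo (-Real.pi) Real.pi := fun h => hr h.1.2
      rw [indicator_of_notMem m1, indicator_of_notMem m2, smul_zero]
  rw [h2, setIntegral_indicator (measurableSet_Ioo.prod measurableSet_Ioo)]
  have h3 : polarCoord.target ∩ Ioo 0 τ ×ˢ Ioo (-Real.pi) Real.pi
      = Ioo 0 τ ×ˢ Ioo (-Real.pi) Real.pi := by
    apply inter_eq_right.2
    rintro ⟨r, θ⟩ hq
    exact ⟨hq.1.1, hq.2⟩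
  rw [h3]
  have hcont : ContinuousOn
      (fun q : ℝ × ℝ => q.1 * z (p.1 + q.1 * Real.cos q.2, p.2 + q.1 * Real.sin q.2))
      (Icc 0 τ ×ˢ Icc (-Real.pi) Real.pi) := by
    apply continuousOn_fst.mul
    have c : ContinuousOn (fun q : ℝ × ℝ => (p.1 + q.1 * Real.cos q.2, p.2 + q.1 * Real.sin q.2))
      (Icc 0 τ ×ˢ Icc (-Real.pi) Real.pi) := by fun_prop
    apply hc.comp c
    rintro ⟨r, θ⟩ hq
    show d2 p _ ≤ τ ^ 2
    have ed : d2 p (p.1 + r * Real.cos θ, p.2 + r * Real.sin θ) = r ^ 2 := by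
      simp only [d2]; linear_combination (r ^ 2) * Real.sin_sq_add_cos_sq θ
    rw [ed]
    have := hq.1.1; have := hq.1.2
    simp only at *
    gcongr
  have hIntg : IntegrableOn
      (fun q : ℝ × ℝ => q.1 * z (p.1 + q.1 * Real.cos q.2, p.2 + q.1 * Real.sin q.2))
      (Ioo 0 τ ×ˢ Ioo (-Real.pi) Real.pi) (volume.prod volume) :=
    (hcont.integrableOn_compact (isCompact_Icc.prod isCompact_Icc)).mono_set
      (prod_mono Ioo_subset_Icc_self Ioo_subset_Icc_self)
  rw [Measure.volume_eq_prod, setIntegral_prod _ hIntg]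
  have hpi : -Real.pi ≤ Real.pi := by linarith [Real.pi_pos]
  apply setIntegral_congr_fun measurableSet_Ioo
  intro r _
  simp only []
  rw [intervalIntegral.integral_of_le hpi, integral_Ioc_eq_integral_Ioo]

lemma disc_const (p : ℝ × ℝ) {τ : ℝ} (hτ : 0 < τ) (c : ℝ) :
    ∫ _x in {x | d2 p x < τ ^ 2}, c = Real.pi * τ ^ 2 * c := by
  rw [disc_integral_polar continuousOn_const hτ]
  simp only [intervalIntegral.integral_const, smul_eq_mul]
  rw [← integral_Ioc_eq_integral_Ioo, ← intervalIntegral.integral_of_le hτ.le,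
    intervalIntegral.integral_const_mul, intervalIntegral.integral_mul_const, integral_id]
  ring

/-- Mean value inequality for functions that are subharmonic in a punctured disc. -/
lemma mean_value {z : ℝ × ℝ → ℝ} {p : ℝ × ℝ} {τ : ℝ} (hτ : 0 < τ)
    (hc : ContinuousOn z {x | d2 p x ≤ τ ^ 2})
    (h2 : ∀ x, x ≠ p → d2 p x < τ ^ 2 → ContDiffAt ℝ 2 z x ∧ 0 ≤ lap z x) :
    Real.pi * τ ^ 2 * z p ≤ ∫ x in {x | d2 p x < τ ^ 2}, z x := by
  have hcp : ContinuousAt z p := by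
    apply hc.continuousAt
    have : {x | d2 p x < τ ^ 2} ∈ 𝓝 p :=
      (isOpen_lt (continuous_d2 p) continuous_const).mem_nhds (by simp [d2_self]; positivity)
    exact mem_of_superset this fun x (hx : d2 p x < τ ^ 2) => hx.le
  have hcirc := circle_mean hτ hcp h2
  rw [← disc_const p hτ, disc_integral_polar continuousOn_const hτ, disc_integral_polar hc hτ]
  have hcont : ContinuousOn
      (fun q : ℝ × ℝ => q.1 * z (p.1 + q.1 * Real.cos q.2, p.2 + q.1 * Real.sin q.2))
      (Icc 0 τ ×ˢ Icc (-Real.pi) Real.pi) := by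
    apply continuousOn_fst.mul
    have c : ContinuousOn (fun q : ℝ × ℝ => (p.1 + q.1 * Real.cos q.2, p.2 + q.1 * Real.sin q.2))
      (Icc 0 τ ×ˢ Icc (-Real.pi) Real.pi) := by fun_prop
    apply hc.comp c
    rintro ⟨r, θ⟩ hq
    show d2 p _ ≤ τ ^ 2
    have ed : d2 p (p.1 + r * Real.cos θ, p.2 + r * Real.sin θ) = r ^ 2 := by
      simp only [d2]; linear_combination (r ^ 2) * Real.sin_sq_add_cos_sq θ
    rw [ed]
    have := hq.1.1; have := hq.1.2
    simp only at *
    gcongr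
  have hIntg : IntegrableOn
      (fun q : ℝ × ℝ => q.1 * z (p.1 + q.1 * Real.cos q.2, p.2 + q.1 * Real.sin q.2))
      (Ioo 0 τ ×ˢ Ioo (-Real.pi) Real.pi) (volume.prod volume) :=
    (hcont.integrableOn_compact (isCompact_Icc.prod isCompact_Icc)).mono_set
      (prod_mono Ioo_subset_Icc_self Ioo_subset_Icc_self)
  have hpi : -Real.pi ≤ Real.pi := by linarith [Real.pi_pos]
  apply setIntegral_mono_on _ _ measurableSet_Ioo
  · intro r hr
    rw [intervalIntegral.integral_const_mul, intervalIntegral.integral_const_mul]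
    apply mul_le_mul_of_nonneg_left _ hr.1.le
    have := hcirc (Real.log r) (Real.log_lt_log hr.1 hr.2)
    simp only [lgp_log hr.1] at this
    rw [intervalIntegral.integral_const, smul_eq_mul]
    linarith
  · simp only [intervalIntegral.integral_const, smul_eq_mul]
    have : Continuous fun x : ℝ => (Real.pi - -Real.pi) * (x * z p) := by fun_prop
    exact (this.continuousOn.integrableOn_compact isCompact_Icc).mono_set Ioo_subset_Icc_self
  · have := Integrable.integral_prod_left (f := fun q : ℝ × ℝ =>
      q.1 * z (p.1 + q.1 * Real.cos q.2, p.2 + q.1 * Real.sin q.2))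
      (μ := volume.restrict (Ioo 0 τ)) (ν := volume.restrict (Ioo (-Real.pi) Real.pi))
      (by rw [Measure.prod_restrict]; exact hIntg)
    unfold IntegrableOn
    convert this using 2 with r
    rw [intervalIntegral.integral_of_le hpi, integral_Ioc_eq_integral_Ioo]

lemma integrableOn_disc {z : ℝ × ℝ → ℝ} {p : ℝ × ℝ} {τ : ℝ}
    (hc : ContinuousOn z {x | d2 p x ≤ τ}) : IntegrableOn z {x | d2 p x < τ} :=
  (hc.integrableOn_compact (isCompact_disc p τ)).mono_set fun x (hx : d2 p x < τ) => hx.le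

lemma exists_disc_subset {Ω : Set (ℝ × ℝ)} {q : ℝ × ℝ} (h : Ω ∈ 𝓝 q) :
    ∃ τ > 0, {x | d2 q x ≤ τ ^ 2} ⊆ Ω := by
  obtain ⟨ε, hε, hb⟩ := Metric.mem_nhds_iff.1 h
  refine ⟨ε / 2, by linarith, fun x hx => hb ?_⟩
  have hx : (x.1 - q.1) ^ 2 + (x.2 - q.2) ^ 2 ≤ (ε / 2) ^ 2 := hx
  rw [Metric.mem_ball, Prod.dist_eq, Real.dist_eq, Real.dist_eq]
  apply max_lt
  · have : |x.1 - q.1| ≤ ε / 2 := abs_le_of_sq_le_sq (by nlinarith [sq_nonneg (x.2 - q.2)]) (by linarith)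
    linarith
  · have : |x.2 - q.2| ≤ ε / 2 := abs_le_of_sq_le_sq (by nlinarith [sq_nonneg (x.1 - q.1)]) (by linarith)
    linarith

/-- Strong minimum principle (local form), with one possible exceptional point `e`. -/
lemma strong_min_local {Ω : Set (ℝ × ℝ)} (hΩ : IsOpen Ω) {z : ℝ × ℝ → ℝ} {e q : ℝ × ℝ}
    (hc : ContinuousOn z Ω) (h0 : ∀ x ∈ Ω, 0 ≤ z x)
    (hl : ∀ x ∈ Ω, x ≠ e → ContDiffAt ℝ 2 z x ∧ lap z x ≤ 0) (hq : q ∈ Ω) (hzq : z q = 0) :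
    ∀ᶠ x in 𝓝 q, z x = 0 := by
  have hΩ' : (Ω ∩ {x | x = q ∨ x ≠ e}) ∈ 𝓝 q := by
    apply inter_mem (hΩ.mem_nhds hq)
    by_cases hqe : q = e
    · subst hqe
      exact univ_mem' fun x => em _
    · filter_upwards [isOpen_ne.mem_nhds hqe] with x hx using Or.inr hx
  obtain ⟨τ, hτ, hsub⟩ := exists_disc_subset hΩ'
  have hcz : ContinuousOn z {x | d2 q x ≤ τ ^ 2} := hc.mono fun x hx => (hsub hx).1
  have hm := mean_value (z := fun x => - z x) hτ hcz.neg (by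
    intro x hx hd
    have hx' := hsub (show d2 q x ≤ τ ^ 2 from hd.le)
    have := hl x hx'.1 (hx'.2.resolve_left hx)
    refine ⟨this.1.neg, ?_⟩
    rw [lap_neg]; linarith)
  rw [hzq, integral_neg] at hm
  have hopen : IsOpen {x | d2 q x < τ ^ 2} := isOpen_lt (continuous_d2 q) continuous_const
  have hnn : ∀ x ∈ {x | d2 q x < τ ^ 2}, 0 ≤ z x := fun x (hx : d2 q x < τ ^ 2) =>
    h0 x (hsub (show d2 q x ≤ τ ^ 2 from hx.le)).1
  have hint0 : ∫ x in {x | d2 q x < τ ^ 2}, z x = 0 := by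
    apply le_antisymm
    · simp at hm; linarith
    · exact setIntegral_nonneg hopen.measurableSet hnn
  rw [setIntegral_eq_zero_iff_of_nonneg_ae
    ((ae_restrict_iff' hopen.measurableSet).2 (Eventually.of_forall hnn)) (integrableOn_disc hcz)] at hint0
  have heq := Measure.eqOn_open_of_ae_eq (μ := volume) hint0 hopen
    (hcz.mono fun x (hx : d2 q x < τ ^ 2) => hx.le) continuousOn_const
  have : {x | d2 q x < τ ^ 2} ∈ 𝓝 q := hopen.mem_nhds (by
    show d2 q q < τ ^ 2
    rw [d2_self]; positivity)
  filter_upwards [this] with x hx using heq hx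

open Filter Topology

lemma nrm_eq_norm (x : ℝ × ℝ) : nrm x = ‖(⟨x.1, x.2⟩ : ℂ)‖ := by
  rw [nrm, Complex.norm_def, Complex.normSq_mk]
  congr 1; ring

lemma nrm_nonneg (x : ℝ × ℝ) : 0 ≤ nrm x := Real.sqrt_nonneg _

lemma nrm_sq (x : ℝ × ℝ) : nrm x ^ 2 = x.1 ^ 2 + x.2 ^ 2 := Real.sq_sqrt (by positivity)

lemma nrm_sub_sq (p x : ℝ × ℝ) : nrm (x - p) ^ 2 = d2 p x := by
  rw [nrm_sq]; rfl

lemma nrm_sq_d2 (x : ℝ × ℝ) : nrm x ^ 2 = d2 0 x := by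
  rw [nrm_sq]; simp [d2]

lemma nrm_pos {x : ℝ × ℝ} (hx : x ≠ 0) : 0 < nrm x := by
  apply Real.sqrt_pos.2
  simpa [d2] using d2_pos hx

lemma nrm_zero : nrm 0 = 0 := by simp [nrm]

lemma ne_zero_of_nrm_pos {x : ℝ × ℝ} (h : 0 < nrm x) : x ≠ 0 := by
  rintro rfl; rw [nrm_zero] at h; exact lt_irrefl _ h

lemma continuous_nrm : Continuous nrm := by unfold nrm; fun_prop

lemma nrm_add_le (x y : ℝ × ℝ) : nrm (x + y) ≤ nrm x + nrm y := by
  rw [nrm_eq_norm, nrm_eq_norm, nrm_eq_norm]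
  have := norm_add_le (⟨x.1, x.2⟩ : ℂ) ⟨y.1, y.2⟩
  have e : (⟨x.1, x.2⟩ : ℂ) + ⟨y.1, y.2⟩ = ⟨(x + y).1, (x + y).2⟩ := by
    apply Complex.ext <;> simp
  rwa [e] at this

lemma nrm_neg (x : ℝ × ℝ) : nrm (-x) = nrm x := by simp [nrm]

lemma nrm_le_of_d2 {p x : ℝ × ℝ} {r : ℝ} (hr : 0 ≤ r) : d2 p x ≤ r ^ 2 ↔ nrm (x - p) ≤ r := by
  rw [← nrm_sub_sq]
  exact pow_le_pow_iff_left₀ (nrm_nonneg _) hr (by norm_num)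

lemma nrm_rpow_eq_exp {x : ℝ × ℝ} (hx : x ≠ 0) (s : ℝ) :
    nrm x ^ s = Real.exp (s / 2 * Real.log (x.1 ^ 2 + x.2 ^ 2) + 0 * Real.log x.1) := by
  rw [Real.rpow_def_of_pos (nrm_pos hx), ← nrm_sq, Real.log_pow]
  congr 1; push_cast; ring

lemma contDiffAt_nrm_rpow {x : ℝ × ℝ} (hx : x ≠ 0) (s : ℝ) :
    ContDiffAt ℝ 2 (fun y => nrm y ^ s) x := by
  apply (contDiffAt_exp_log (s / 2) 0 hx (Or.inl rfl)).congr_of_eventuallyEq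
  filter_upwards [isOpen_ne.mem_nhds hx] with y hy using nrm_rpow_eq_exp hy s

lemma lap_nrm_rpow {x : ℝ × ℝ} (hx : x ≠ 0) (s : ℝ) :
    lap (fun y => nrm y ^ s) x = s ^ 2 * nrm x ^ (s - 2) := by
  have : (fun y => nrm y ^ s) =ᶠ[𝓝 x] fun y =>
      Real.exp (s / 2 * Real.log (y.1 ^ 2 + y.2 ^ 2) + 0 * Real.log y.1) := by
    filter_upwards [isOpen_ne.mem_nhds hx] with y hy using nrm_rpow_eq_exp hy s
  rw [lap_congr this, lap_exp_log _ _ hx (Or.inl rfl), ← nrm_rpow_eq_exp hx, ← nrm_sq,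
    Real.rpow_sub (nrm_pos hx), Real.rpow_two]
  have := nrm_pos hx
  field_simp
  ring

/-- The nonlinear density. -/
noncomputable def Vf {n : ℕ} (β : Fin n → ℝ) (u : Fin n → ℝ × ℝ → ℝ) (j : Fin n) (x : ℝ × ℝ) : ℝ :=
  nrm x ^ β j * Real.exp (u j x)

section
variable {n : ℕ} {A : Matrix (Fin n) (Fin n) ℝ} {β : Fin n → ℝ} {u : Fin n → ℝ × ℝ → ℝ}

lemma Vf_nonneg (j : Fin n) (x : ℝ × ℝ) : 0 ≤ Vf β u j x :=
  mul_nonneg (Real.rpow_nonneg (nrm_nonneg x) _) (Real.exp_pos _).le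

lemma Vf_pos (j : Fin n) {x : ℝ × ℝ} (hx : x ≠ 0) : 0 < Vf β u j x :=
  mul_pos (Real.rpow_pos_of_pos (nrm_pos hx) _) (Real.exp_pos _)

lemma lap_u (hu : PDESolution A β u) (i : Fin n) {x : ℝ × ℝ} (hx : x ≠ 0) :
    lap (u i) x = - ∑ j, A i j * Vf β u j x := by
  have := hu.2.2.1 i x hx
  simp only [Vf, ← mul_assoc]
  linarith

lemma Vf_continuousAt (hu : PDESolution A β u) (j : Fin n) {x : ℝ × ℝ} (hx : x ≠ 0) :
    ContinuousAt (Vf β u j) x := by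
  unfold Vf
  apply ContinuousAt.mul
  · exact continuous_nrm.continuousAt.rpow_const (Or.inl (nrm_pos hx).ne')
  · exact (Real.continuous_exp.comp (hu.1 j)).continuousAt

lemma rowsum_le (hA : ∀ i j, 0 ≤ A i j) (i : Fin n) : ∑ j, A i j ≤ 1 + ∑ i, ∑ j, A i j := by
  have := Finset.single_le_sum (f := fun i => ∑ j, A i j)
    (fun i _ => Finset.sum_nonneg fun j _ => hA i j) (Finset.mem_univ i)
  have this : ∑ j, A i j ≤ ∑ i, ∑ j, A i j := this
  linarith

lemma tail_small (hu : PDESolution A β u) {η : ℝ} (hη : 0 < η) :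
    ∃ ρ > 0, ∀ j, ∫ x in {x | ρ ≤ nrm x}, Vf β u j x ≤ η := by
  have h : ∀ j, ∀ᶠ k : ℕ in atTop, ∫ x in {x | (k : ℝ) ≤ nrm x}, Vf β u j x ≤ η := by
    intro j
    have := tendsto_setIntegral_of_antitone (μ := volume) (f := Vf β u j)
      (s := fun k : ℕ => {x | (k : ℝ) ≤ nrm x})
      (fun k => (isClosed_le continuous_const continuous_nrm).measurableSet)
      (fun a b hab x (hx : (b : ℝ) ≤ nrm x) => le_trans (by exact_mod_cast hab) hx)
      ⟨0, (hu.2.2.2 j).integrableOn⟩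
    have he : ⋂ k : ℕ, {x : ℝ × ℝ | (k : ℝ) ≤ nrm x} = ∅ := by
      apply eq_empty_of_forall_notMem
      intro x hx
      obtain ⟨k, hk⟩ := exists_nat_gt (nrm x)
      have : (k : ℝ) ≤ nrm x := mem_iInter.1 hx k
      linarith
    rw [he, setIntegral_empty] at this
    exact (this.eventually (gt_mem_nhds hη)).mono fun k hk => hk.le
  obtain ⟨k, hk, hk1⟩ := ((eventually_all.2 h).and (eventually_ge_atTop 1)).exists
  exact ⟨k, by exact_mod_cast hk1, hk⟩

set_option maxHeartbeats 1000000 in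
/-- ε-regularity: `|x|^2 V_j(x) → 0` at infinity. -/
lemma eps_reg (hA : ∀ i j, 0 ≤ A i j) (hβ : ∀ i, -2 < β i ∧ β i ≤ 0) (hu : PDESolution A β u)
    {η : ℝ} (hη : 0 < η) : ∃ ρ > 0, ∀ x, ρ ≤ nrm x → ∀ j, nrm x ^ 2 * Vf β u j x ≤ η := by
  set CA : ℝ := 1 + ∑ i, ∑ j, A i j with hCA
  have hCA1 : 1 ≤ CA := by
    have : 0 ≤ ∑ i, ∑ j, A i j := Finset.sum_nonneg fun i _ => Finset.sum_nonneg fun j _ => hA i j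
    linarith
  set ε := min (η / 96) (1 / (24 * CA)) with hε
  have hε0 : 0 < ε := lt_min (by positivity) (by positivity)
  obtain ⟨ρ, hρ, htail⟩ := tail_small hu hε0
  refine ⟨2 * ρ, by positivity, ?_⟩
  intro x0 hx0 j
  set r := nrm x0 / 2 with hr
  have hr0 : ρ ≤ r := by linarith
  have hrpos : 0 < r := by linarith
  have hK : IsCompact {y | d2 x0 y ≤ r ^ 2} := isCompact_disc x0 _
  have hKn : ∀ y, d2 x0 y ≤ r ^ 2 → r ≤ nrm y ∧ nrm y ≤ 3 * r := by
    intro y hy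
    rw [nrm_le_of_d2 hrpos.le] at hy
    have h1 := nrm_add_le y (-(y - x0))
    have h2 := nrm_add_le x0 (y - x0)
    rw [nrm_neg, show y + -(y - x0) = x0 by abel] at h1
    rw [show x0 + (y - x0) = y by abel] at h2
    constructor <;> linarith
  have hne : ∀ y, d2 x0 y ≤ r ^ 2 → y ≠ 0 := fun y hy =>
    ne_zero_of_nrm_pos (hrpos.trans_le (hKn y hy).1)
  set Φ : Fin n → ℝ × ℝ → ℝ := fun k y => (r - nrm (y - x0)) ^ 2 * Vf β u k y with hΦ
  have hΦc : ∀ k, ContinuousOn (Φ k) {y | d2 x0 y ≤ r ^ 2} := by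
    intro k y hy
    have : ContinuousAt (fun y => (r - nrm (y - x0)) ^ 2) y := by
      have h1 : Continuous (fun y => nrm (y - x0)) := continuous_nrm.comp (by fun_prop)
      exact ((continuous_const.sub h1).pow 2).continuousAt
    exact (this.mul (Vf_continuousAt hu k (hne y hy))).continuousWithinAt
  have hx0K : x0 ∈ {y | d2 x0 y ≤ r ^ 2} := by
    show d2 x0 x0 ≤ r ^ 2
    rw [d2_self]; positivity
  have hmax : ∀ k, ∃ y ∈ {y | d2 x0 y ≤ r ^ 2}, IsMaxOn (Φ k) {y | d2 x0 y ≤ r ^ 2} y := fun k =>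
    hK.exists_isMaxOn ⟨x0, hx0K⟩ (hΦc k)
  choose ys hysK hysmax using hmax
  have : Nonempty (Fin n) := ⟨j⟩
  obtain ⟨jm, hjm⟩ := Finite.exists_max (fun k => Φ k (ys k))
  set ym := ys jm with hym
  have hymK : d2 x0 ym ≤ r ^ 2 := hysK jm
  set M := Φ jm ym with hM
  have hMmax : ∀ k y, d2 x0 y ≤ r ^ 2 → Φ k y ≤ M := fun k y hy =>
    (hysmax k hy).trans (hjm k)
  have hMx0 : r ^ 2 * Vf β u j x0 ≤ M := by
    have := hMmax j x0 hx0K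
    simpa [hΦ, nrm_zero] using this
  have hx0ne : x0 ≠ 0 := hne x0 hx0K
  have hMpos : 0 < M := lt_of_lt_of_le (mul_pos (by positivity) (Vf_pos j hx0ne)) hMx0
  set δ := r - nrm (ym - x0) with hδ
  have hδ0 : 0 ≤ δ := by
    have := (nrm_le_of_d2 hrpos.le).1 hymK
    linarith
  have hMe : M = δ ^ 2 * Vf β u jm ym := rfl
  have hδpos : 0 < δ := by
    rcases hδ0.lt_or_eq with h | h
    · exact h
    · rw [← h] at hMe; simp at hMe; linarith
  set σ := δ / 2 with hσ
  have hσpos : 0 < σ := by positivity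
  have hsmall : ∀ y, d2 ym y ≤ σ ^ 2 → d2 x0 y ≤ r ^ 2 ∧ ∀ k, Vf β u k y ≤ M / σ ^ 2 := by
    intro y hy
    have hy' := (nrm_le_of_d2 hσpos.le).1 hy
    have h1 := nrm_add_le (y - ym) (ym - x0)
    rw [show y - ym + (ym - x0) = y - x0 by abel] at h1
    have h2 : nrm (y - x0) ≤ r - σ := by linarith
    have h3 : d2 x0 y ≤ r ^ 2 := (nrm_le_of_d2 hrpos.le).2 (by linarith)
    refine ⟨h3, fun k => ?_⟩
    rw [le_div_iff₀ (by positivity)]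
    have h4 := hMmax k y h3
    simp only [hΦ] at h4
    have h5 : σ ^ 2 ≤ (r - nrm (y - x0)) ^ 2 := by
      have : σ ≤ r - nrm (y - x0) := by linarith
      gcongr
    have := mul_le_mul_of_nonneg_right h5 (Vf_nonneg (β := β) (u := u) k y)
    linarith
  set t := min 1 (2 / (CA * M)) with ht
  have ht0 : 0 < t := lt_min one_pos (by positivity)
  have ht1 : t ≤ 1 := min_le_left _ _
  have ht2 : CA * M * t ≤ 2 := by
    have := min_le_right 1 (2 / (CA * M))
    rw [← ht, le_div_iff₀ (by positivity)] at this
    linarith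
  set τ := σ * Real.sqrt t with hτ
  have hτpos : 0 < τ := by positivity
  have hτsq : τ ^ 2 = σ ^ 2 * t := by rw [hτ, mul_pow, Real.sq_sqrt ht0.le]
  have hτσ : τ ^ 2 ≤ σ ^ 2 := by rw [hτsq]; nlinarith [sq_nonneg σ]
  set Kc := CA * (M / σ ^ 2) with hKc
  have hKτ : Kc / 4 * τ ^ 2 ≤ 1 / 2 := by
    rw [hKc, hτsq]
    have : CA * (M / σ ^ 2) / 4 * (σ ^ 2 * t) = CA * M * t / 4 := by field_simp
    rw [this]; linarith
  have hKc0 : 0 ≤ Kc := by positivity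
  -- mean value
  set v : ℝ × ℝ → ℝ := fun y => u jm y + Kc / 4 * d2 ym y with hv
  have hvc : Continuous v := (hu.1 jm).add (continuous_const.mul (continuous_d2 ym))
  have hmv := mean_value (z := v) hτpos hvc.continuousOn (by
    intro y _ hy
    obtain ⟨hyK, hyV⟩ := hsmall y (hy.le.trans hτσ)
    have hy0 := hne y hyK
    have c1 := hu.2.1 jm y hy0
    have c2 : ContDiffAt ℝ 2 (fun y => Kc / 4 * d2 ym y) y :=
      contDiffAt_const.mul (contDiff_d2 ym).contDiffAt
    refine ⟨c1.add c2, ?_⟩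
    rw [lap_add c1 c2, lap_const_mul, lap_d2, lap_u hu jm hy0]
    have : ∑ k, A jm k * Vf β u k y ≤ ∑ k, A jm k * (M / σ ^ 2) :=
      Finset.sum_le_sum fun k _ => mul_le_mul_of_nonneg_left (hyV k) (hA jm k)
    rw [← Finset.sum_mul] at this
    have h2 : (∑ k, A jm k) * (M / σ ^ 2) ≤ CA * (M / σ ^ 2) :=
      mul_le_mul_of_nonneg_right (rowsum_le hA jm) (by positivity)
    linarith)
  have hvym : v ym = u jm ym := by simp [hv, d2_self]
  rw [hvym] at hmv
  set D := {y | d2 ym y < τ ^ 2} with hD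
  have hDm : MeasurableSet D := (isOpen_lt (continuous_d2 ym) continuous_const).measurableSet
  set W := Vf β u jm ym with hW
  have hWpos : 0 < W := Vf_pos jm (hne ym hymK)
  have hpt : ∀ y ∈ D, W / 9 * (1 - u jm ym - 1 / 2) + W / 9 * v y ≤ Vf β u jm y := by
    intro y hy
    have hy : d2 ym y < τ ^ 2 := hy
    obtain ⟨hyK, -⟩ := hsmall y (hy.le.trans hτσ)
    have hyn := hKn y hyK
    have hymn := hKn ym hymK
    have e1 : W / 9 * Real.exp (u jm y - u jm ym) ≤ Vf β u jm y := by
      have p1 : nrm ym ^ β jm ≤ r ^ β jm :=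
        Real.rpow_le_rpow_of_nonpos hrpos hymn.1 (hβ jm).2
      have p2 : (3 * r) ^ β jm ≤ nrm y ^ β jm :=
        Real.rpow_le_rpow_of_nonpos (by linarith) hyn.2 (hβ jm).2
      have p3 : (1 : ℝ) / 9 ≤ 3 ^ β jm := by
        have : (3 : ℝ) ^ (-2 : ℝ) ≤ 3 ^ β jm :=
          Real.rpow_le_rpow_of_exponent_le (by norm_num) (hβ jm).1.le
        have e : (3 : ℝ) ^ (-2 : ℝ) = 1 / 9 := by
          rw [Real.rpow_neg (by norm_num), Real.rpow_two]; norm_num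
        exact e ▸ this
      rw [Real.mul_rpow (by norm_num) hrpos.le] at p2
      have p4 : nrm ym ^ β jm / 9 ≤ nrm y ^ β jm := by
        have := mul_le_mul_of_nonneg_right p3 (Real.rpow_nonneg hrpos.le (β jm))
        linarith
      have e2 : W / 9 * Real.exp (u jm y - u jm ym) = nrm ym ^ β jm / 9 * Real.exp (u jm y) := by
        rw [hW, Vf, Real.exp_sub]
        have := (Real.exp_pos (u jm ym)).ne'
        field_simp
      rw [e2, Vf]
      exact mul_le_mul_of_nonneg_right p4 (Real.exp_pos _).le
    have e3 : 1 - u jm ym - 1 / 2 + v y ≤ Real.exp (u jm y - u jm ym) := by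
      have := Real.add_one_le_exp (u jm y - u jm ym)
      have h2 : Kc / 4 * d2 ym y ≤ Kc / 4 * τ ^ 2 :=
        mul_le_mul_of_nonneg_left hy.le (by positivity)
      simp only [hv]
      linarith
    have := mul_le_mul_of_nonneg_left e3 (show 0 ≤ W / 9 by positivity)
    linarith
  have hVint : Integrable (Vf β u jm) := hu.2.2.2 jm
  have hvint : IntegrableOn v D := integrableOn_disc hvc.continuousOn
  have hcint : IntegrableOn (fun _ : ℝ × ℝ => W / 9 * (1 - u jm ym - 1 / 2)) D :=
    integrableOn_disc continuousOn_const
  have i1 := setIntegral_mono_on (hcint.add (hvint.const_mul (W / 9))) hVint.integrableOn hDm hpt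
  have i2 : ∫ y in D, Vf β u jm y ≤ ε := by
    refine le_trans (setIntegral_mono_set hVint.integrableOn
      (Eventually.of_forall fun y => Vf_nonneg jm y) ?_) (htail jm)
    apply LE.le.eventuallyLE
    intro y hy
    have hy : d2 ym y < τ ^ 2 := hy
    exact hr0.trans (hKn y (hsmall y (hy.le.trans hτσ)).1).1
  have i3 : ∫ y in D, (W / 9 * (1 - u jm ym - 1 / 2) + W / 9 * v y)
      = Real.pi * τ ^ 2 * (W / 9 * (1 - u jm ym - 1 / 2)) + W / 9 * ∫ y in D, v y := by
    rw [integral_add hcint (hvint.const_mul _), disc_const ym hτpos, integral_const_mul]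
  have i4 : Real.pi * τ ^ 2 * (W / 18) ≤ ε := by
    have i1' : ∫ y in D, (W / 9 * (1 - u jm ym - 1 / 2) + W / 9 * v y) ≤ ∫ y in D, Vf β u jm y := i1
    rw [i3] at i1'
    have := mul_le_mul_of_nonneg_left hmv (show 0 ≤ W / 9 by positivity)
    nlinarith
  have i5 : M * t ≤ 24 * ε := by
    have e : M = 4 * σ ^ 2 * W := by rw [hMe, hσ]; ring
    have e2 : Real.pi * τ ^ 2 * (W / 18) = Real.pi * (M * t) / 72 := by rw [hτsq, e]; ring
    rw [e2] at i4
    have : 3 * (M * t) ≤ Real.pi * (M * t) :=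
      mul_le_mul_of_nonneg_right Real.pi_gt_three.le (by positivity)
    linarith
  have hM24 : M ≤ 24 * ε := by
    rcases le_total 1 (2 / (CA * M)) with h | h
    · rw [ht, min_eq_left h, mul_one] at i5; exact i5
    · exfalso
      rw [ht, min_eq_right h] at i5
      have e : M * (2 / (CA * M)) = 2 / CA := by field_simp
      rw [e] at i5
      have : 24 * ε ≤ 1 / CA := by
        have := min_le_right (η / 96) (1 / (24 * CA))
        calc 24 * ε ≤ 24 * (1 / (24 * CA)) := by linarith
          _ = 1 / CA := by field_simp
      have : 1 / CA < 2 / CA := by gcongr; norm_num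
      linarith
  have hη' : ε ≤ η / 96 := min_le_left _ _
  have e : nrm x0 ^ 2 = 4 * r ^ 2 := by rw [hr]; ring
  rw [e]
  linarith

end

open Filter Topology

section
variable {n : ℕ} {A : Matrix (Fin n) (Fin n) ℝ} {β : Fin n → ℝ} {u : Fin n → ℝ × ℝ → ℝ}

lemma u_upper (hA : ∀ i j, 0 ≤ A i j) (hβ : ∀ i, -2 < β i ∧ β i ≤ 0) (hu : PDESolution A β u) :
    ∃ C0 : ℝ, 0 ≤ C0 ∧ ∀ i x, u i x ≤ C0 := by
  obtain ⟨ρ, hρ, h⟩ := eps_reg hA hβ hu one_pos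
  set R := max ρ 1 with hR
  have hK : IsCompact {x | d2 0 x ≤ R ^ 2} := isCompact_disc 0 _
  have hb : ∀ i, ∃ C : ℝ, ∀ x ∈ {x | d2 0 x ≤ R ^ 2}, ‖u i x‖ ≤ C := fun i =>
    hK.exists_bound_of_continuousOn (hu.1 i).continuousOn
  choose C hC using hb
  have hR1 : 1 ≤ R := le_max_right _ _
  refine ⟨∑ i, |C i|, Finset.sum_nonneg fun i _ => abs_nonneg _, fun i x => ?_⟩
  have hs : |C i| ≤ ∑ i, |C i| :=
    Finset.single_le_sum (f := fun i => |C i|) (fun i _ => abs_nonneg _) (Finset.mem_univ i)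
  by_cases hx : d2 0 x ≤ R ^ 2
  · have := hC i x hx
    rw [Real.norm_eq_abs] at this
    exact (le_abs_self _).trans (this.trans ((le_abs_self _).trans hs))
  · have hxR : R < nrm x := by
      rw [← nrm_sq_d2] at hx
      push Not at hx
      exact lt_of_pow_lt_pow_left₀ 2 (nrm_nonneg _) hx
    have hx0 : 0 < nrm x := by linarith
    have h1 := h x ((le_max_left _ _).trans hxR.le) i
    have h2 : 1 ≤ nrm x ^ 2 * nrm x ^ β i := by
      rw [← Real.rpow_natCast, ← Real.rpow_add hx0]
      apply Real.one_le_rpow (by linarith)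
      have := (hβ i).1
      push_cast; linarith
    have h3 : Real.exp (u i x) ≤ 1 := by
      rw [Vf, ← mul_assoc] at h1
      have := mul_le_mul_of_nonneg_right h2 (Real.exp_pos (u i x)).le
      linarith
    have h4 : u i x ≤ 0 := by
      rwa [Real.exp_le_one_iff] at h3
    exact h4.trans ((abs_nonneg _).trans hs)

lemma Vf_le (hA : ∀ i j, 0 ≤ A i j) (hβ : ∀ i, -2 < β i ∧ β i ≤ 0) (hu : PDESolution A β u)
    (hn : 0 < n) :
    ∃ s : ℝ, 0 < s ∧ s ≤ 1 / 16 ∧ ∃ C : ℝ, 0 ≤ C ∧ ∀ j x, x ≠ 0 → Vf β u j x ≤ C * nrm x ^ (s - 2) := by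
  obtain ⟨C0, hC0, hup⟩ := u_upper hA hβ hu
  obtain ⟨ρ, hρ, h⟩ := eps_reg hA hβ hu one_pos
  set R := max ρ 1 with hR
  have hR1 : 1 ≤ R := le_max_right _ _
  have : Nonempty (Fin n) := ⟨⟨0, hn⟩⟩
  obtain ⟨jm, hjm⟩ := Finite.exists_min (fun j => 2 + β j)
  set s := min (1 / 16) (2 + β jm) with hs
  have hs0 : 0 < s := lt_min (by norm_num) (by have := (hβ jm).1; linarith)
  have hsβ : ∀ j, s ≤ 2 + β j := fun j => (min_le_right _ _).trans (hjm j)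
  refine ⟨s, hs0, min_le_left _ _, 1 + Real.exp C0 * R ^ 2, by positivity, fun j x hx => ?_⟩
  have hx0 := nrm_pos hx
  have hp : 0 < nrm x ^ (s - 2) := Real.rpow_pos_of_pos hx0 _
  rcases le_total R (nrm x) with hc | hc
  · have h1 := h x ((le_max_left _ _).trans hc) j
    have e : nrm x ^ (s - 2) * nrm x ^ 2 = nrm x ^ s := by
      rw [← Real.rpow_natCast (nrm x) 2, ← Real.rpow_add hx0]; congr 1; push_cast; ring
    have h2 : 1 ≤ nrm x ^ s := Real.one_le_rpow (hR1.trans hc) hs0.le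
    have h3 : Vf β u j x ≤ nrm x ^ (s - 2) := by
      have : nrm x ^ 2 * Vf β u j x ≤ nrm x ^ 2 * nrm x ^ (s - 2) := by linarith
      exact le_of_mul_le_mul_left this (by positivity)
    have : 0 ≤ Real.exp C0 * R ^ 2 * nrm x ^ (s - 2) := by positivity
    linarith
  · have e : nrm x ^ β j = nrm x ^ (s - 2) * nrm x ^ (2 + β j - s) := by
      rw [← Real.rpow_add hx0]; congr 1; ring
    have h2 : nrm x ^ (2 + β j - s) ≤ R ^ 2 := by
      calc nrm x ^ (2 + β j - s) ≤ R ^ (2 + β j - s) :=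
            Real.rpow_le_rpow hx0.le hc (by linarith [hsβ j])
        _ ≤ R ^ (2 : ℝ) := Real.rpow_le_rpow_of_exponent_le hR1 (by linarith [(hβ j).2])
        _ = R ^ 2 := Real.rpow_two _
    have h3 : Real.exp (u j x) ≤ Real.exp C0 := Real.exp_le_exp.2 (hup j x)
    calc Vf β u j x = nrm x ^ (s - 2) * (nrm x ^ (2 + β j - s) * Real.exp (u j x)) := by
          rw [Vf, e]; ring
      _ ≤ nrm x ^ (s - 2) * (R ^ 2 * Real.exp C0) := by
          gcongr
      _ ≤ _ := by nlinarith

lemma u_lower (hA : ∀ i j, 0 ≤ A i j) (hβ : ∀ i, -2 < β i ∧ β i ≤ 0) (hu : PDESolution A β u)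
    (hn : 0 < n) :
    ∃ s : ℝ, 0 < s ∧ s ≤ 1 / 16 ∧ ∃ C : ℝ, 0 ≤ C ∧ ∀ i x, -(C * (1 + nrm x ^ s)) ≤ u i x := by
  obtain ⟨C0, hC0, hup⟩ := u_upper hA hβ hu
  obtain ⟨s, hs0, hs1, C3, hC3, hV⟩ := Vf_le hA hβ hu hn
  set CA : ℝ := 1 + ∑ i, ∑ j, A i j with hCA
  have hCA1 : 1 ≤ CA := by
    have : 0 ≤ ∑ i, ∑ j, A i j := Finset.sum_nonneg fun i _ => Finset.sum_nonneg fun j _ => hA i j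
    linarith
  set C4 := CA * C3 / s ^ 2 with hC4
  have hC40 : 0 ≤ C4 := by positivity
  have hu0 : 0 ≤ ∑ i, |u i 0| := Finset.sum_nonneg fun i _ => abs_nonneg _
  refine ⟨s, hs0, hs1, 4 * (C0 + ∑ i, |u i 0|) + 8 * C4, by positivity, fun i p => ?_⟩
  have hui : -u i 0 ≤ ∑ i, |u i 0| :=
    (neg_le_abs _).trans
      (Finset.single_le_sum (f := fun i => |u i 0|) (fun i _ => abs_nonneg _) (Finset.mem_univ i))
  by_cases hp : p = 0
  · subst hp
    have h0 : (0 : ℝ) ≤ nrm 0 ^ s := Real.rpow_nonneg (nrm_nonneg _) _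
    have : 0 ≤ (4 * (C0 + ∑ i, |u i 0|) + 8 * C4) * nrm 0 ^ s := by positivity
    linarith
  set ℓ := nrm p with hℓ
  have hℓ0 : 0 < ℓ := nrm_pos hp
  have hcz : Continuous (fun x => u i x + C4 * nrm x ^ s) :=
    (hu.1 i).add (continuous_const.mul (continuous_nrm.rpow_const fun x => Or.inr hs0.le))
  have h2ℓ : 0 < 2 * ℓ := by positivity
  have m1 := mean_value (z := fun x => u i x + C4 * nrm x ^ s) (p := 0) h2ℓ hcz.continuousOn (by
    intro x hx _
    have c1 := hu.2.1 i x hx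
    have c2 : ContDiffAt ℝ 2 (fun x => C4 * nrm x ^ s) x :=
      contDiffAt_const.mul (contDiffAt_nrm_rpow hx s)
    refine ⟨c1.add c2, ?_⟩
    rw [lap_add c1 c2, lap_const_mul, lap_nrm_rpow hx, lap_u hu i hx]
    have h1 : ∑ k, A i k * Vf β u k x ≤ ∑ k, A i k * (C3 * nrm x ^ (s - 2)) :=
      Finset.sum_le_sum fun k _ => mul_le_mul_of_nonneg_left (hV k x hx) (hA i k)
    rw [← Finset.sum_mul] at h1
    have hp : 0 ≤ nrm x ^ (s - 2) := Real.rpow_nonneg (nrm_nonneg _) _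
    have h2 : (∑ k, A i k) * (C3 * nrm x ^ (s - 2)) ≤ CA * (C3 * nrm x ^ (s - 2)) :=
      mul_le_mul_of_nonneg_right (rowsum_le hA i) (by positivity)
    have e : C4 * (s ^ 2 * nrm x ^ (s - 2)) = CA * (C3 * nrm x ^ (s - 2)) := by
      rw [hC4]; field_simp
    rw [e]; linarith)
  have m2 := mean_value (z := fun x => C0 - u i x) (p := p) hℓ0
      (continuous_const.sub (hu.1 i)).continuousOn (by
    intro x _ hx
    have hx0 : x ≠ 0 := by
      rintro rfl
      rw [← nrm_sub_sq, zero_sub, nrm_neg] at hx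
      exact lt_irrefl _ hx
    have c1 := hu.2.1 i x hx0
    refine ⟨contDiffAt_const.sub c1, ?_⟩
    rw [lap_sub contDiffAt_const c1, lap_const, lap_u hu i hx0]
    have : 0 ≤ ∑ k, A i k * Vf β u k x :=
      Finset.sum_nonneg fun k _ => mul_nonneg (hA i k) (Vf_nonneg k x)
    linarith)
  have hz0 : nrm 0 ^ s = 0 := by rw [nrm_zero, Real.zero_rpow hs0.ne']
  simp only [hz0, mul_zero, add_zero] at m1
  set D := {x : ℝ × ℝ | d2 0 x < (2 * ℓ) ^ 2} with hD
  have hDm : MeasurableSet D := (isOpen_lt (continuous_d2 0) continuous_const).measurableSet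
  have iu : IntegrableOn (u i) D := integrableOn_disc (hu.1 i).continuousOn
  have ic : ∀ c : ℝ, IntegrableOn (fun _ : ℝ × ℝ => c) D := fun c =>
    integrableOn_disc continuousOn_const
  have m3 : ∫ x in {x | d2 p x < ℓ ^ 2}, (C0 - u i x) ≤ ∫ x in D, (C0 - u i x) := by
    apply setIntegral_mono_set ((ic C0).sub iu)
      (Eventually.of_forall fun x => sub_nonneg.2 (hup i x))
    apply LE.le.eventuallyLE
    intro x hx
    have hx : d2 p x < ℓ ^ 2 := hx
    show d2 0 x < (2 * ℓ) ^ 2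
    rw [← nrm_sub_sq] at hx
    have hx' := lt_of_pow_lt_pow_left₀ 2 hℓ0.le hx
    have := nrm_add_le (x - p) p
    rw [sub_add_cancel] at this
    rw [← nrm_sq_d2]
    have h3 : nrm x < 2 * ℓ := by linarith
    exact pow_lt_pow_left₀ h3 (nrm_nonneg _) (by norm_num)
  have m4 : ∫ x in D, (u i x + C4 * nrm x ^ s) ≤ ∫ x in D, (u i x + C4 * (2 * ℓ) ^ s) := by
    apply setIntegral_mono_on (integrableOn_disc hcz.continuousOn) (iu.add (ic _)) hDm
    intro x hx
    have hx : d2 0 x < (2 * ℓ) ^ 2 := hx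
    rw [← nrm_sq_d2] at hx
    have hx' := lt_of_pow_lt_pow_left₀ 2 h2ℓ.le hx
    have := Real.rpow_le_rpow (nrm_nonneg x) hx'.le hs0.le
    have := mul_le_mul_of_nonneg_left this hC40
    exact add_le_add (le_refl (u i x)) this
  rw [integral_add iu (ic _), disc_const 0 h2ℓ] at m4
  rw [integral_sub (ic _) iu, disc_const 0 h2ℓ] at m3
  have h2s : (2 * ℓ) ^ s ≤ 2 * ℓ ^ s := by
    rw [Real.mul_rpow (by norm_num) hℓ0.le]
    have : (2 : ℝ) ^ s ≤ 2 ^ (1 : ℝ) :=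
      Real.rpow_le_rpow_of_exponent_le (by norm_num) (by linarith)
    rw [Real.rpow_one] at this
    exact mul_le_mul_of_nonneg_right this (Real.rpow_nonneg hℓ0.le _)
  have hfin : Real.pi * ℓ ^ 2 * (C0 - u i p)
      ≤ Real.pi * ℓ ^ 2 * (4 * (C0 - u i 0 + C4 * (2 * ℓ) ^ s)) := by
    have : Real.pi * ℓ ^ 2 * (4 * (C0 - u i 0 + C4 * (2 * ℓ) ^ s)) =
      Real.pi * (2 * ℓ) ^ 2 * C0 - Real.pi * (2 * ℓ) ^ 2 * u i 0
        + Real.pi * (2 * ℓ) ^ 2 * (C4 * (2 * ℓ) ^ s) := by ring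
    rw [this]
    linarith
  have hfin' := le_of_mul_le_mul_left hfin (by positivity)
  have h5 := mul_le_mul_of_nonneg_left h2s hC40
  have h6 : 0 ≤ (C0 + ∑ i, |u i 0|) * ℓ ^ s :=
    mul_nonneg (by positivity) (Real.rpow_nonneg hℓ0.le _)
  have e : (4 * (C0 + ∑ i, |u i 0|) + 8 * C4) * (1 + ℓ ^ s)
    = 4 * (C0 + ∑ i, |u i 0|) + 4 * ((C0 + ∑ i, |u i 0|) * ℓ ^ s) + 8 * C4 + 8 * (C4 * ℓ ^ s) := by
    ring
  rw [e]
  linarith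

end

open Filter Topology

/-- The reflected difference. -/
noncomputable def wf {n : ℕ} (u : Fin n → ℝ × ℝ → ℝ) (l : ℝ) (i : Fin n) (x : ℝ × ℝ) : ℝ :=
  u i (2 * l - x.1, x.2) - u i x

/-- The barrier at infinity. -/
noncomputable def gb (x : ℝ × ℝ) : ℝ :=
  Real.exp (1 / 16 * Real.log (x.1 ^ 2 + x.2 ^ 2) + 1 / 2 * Real.log x.1)

lemma gb_pos (x : ℝ × ℝ) : 0 < gb x := Real.exp_pos _

lemma ne_zero_of_fst_pos {x : ℝ × ℝ} (h : 0 < x.1) : x ≠ 0 := by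
  rintro rfl; exact lt_irrefl _ h

lemma gb_contDiffAt {x : ℝ × ℝ} (h : 0 < x.1) : ContDiffAt ℝ 2 gb x :=
  contDiffAt_exp_log (1 / 16) (1 / 2) (ne_zero_of_fst_pos h) (Or.inr h)

lemma lap_gb_le {x : ℝ × ℝ} (h : 0 < x.1) : lap gb x ≤ - (7 / 64) * (gb x / nrm x ^ 2) := by
  have e := lap_exp_log (1 / 16) (1 / 2) (ne_zero_of_fst_pos h) (Or.inr h)
  have e' : lap gb x = gb x * ((4 * (1 / 16) ^ 2 + 4 * (1 / 16) * (1 / 2)) / (x.1 ^ 2 + x.2 ^ 2)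
    + ((1 / 2) ^ 2 - 1 / 2) / x.1 ^ 2) := e
  rw [e', ← nrm_sq]
  have hn : 0 < nrm x ^ 2 := by have := nrm_pos (ne_zero_of_fst_pos h); positivity
  have h1 : 1 / nrm x ^ 2 ≤ 1 / x.1 ^ 2 := by
    apply one_div_le_one_div_of_le (by positivity)
    rw [nrm_sq]; nlinarith [sq_nonneg x.2]
  have e2 : - (7 / 64) * (gb x / nrm x ^ 2) = gb x * (-(7 / 64) * (1 / nrm x ^ 2)) := by ring
  rw [e2]
  apply mul_le_mul_of_nonneg_left _ (gb_pos x).le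
  have e3 : (4 * (1 / 16) ^ 2 + 4 * (1 / 16) * (1 / 2)) / nrm x ^ 2
    + ((1 / 2) ^ 2 - 1 / 2) / x.1 ^ 2 = 9 / 64 * (1 / nrm x ^ 2) - 1 / 4 * (1 / x.1 ^ 2) := by ring
  rw [e3]; linarith

lemma gb_ge {l : ℝ} (hl : 0 < l) {x : ℝ × ℝ} (h : l ≤ x.1) :
    l ^ (1 / 2 : ℝ) * nrm x ^ (1 / 8 : ℝ) ≤ gb x := by
  have hx : 0 < x.1 := hl.trans_le h
  have e : gb x = nrm x ^ (1 / 8 : ℝ) * x.1 ^ (1 / 2 : ℝ) := by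
    rw [gb, Real.exp_add, Real.rpow_def_of_pos (nrm_pos (ne_zero_of_fst_pos hx)),
      Real.rpow_def_of_pos hx, ← nrm_sq, Real.log_pow]
    congr 2 <;> push_cast <;> ring
  rw [e, mul_comm]
  apply mul_le_mul_of_nonneg_left _ (Real.rpow_nonneg (nrm_nonneg _) _)
  exact Real.rpow_le_rpow hl.le h (by norm_num)

lemma nrm_refl_lt {l : ℝ} (hl : 0 < l) {x : ℝ × ℝ} (h : l < x.1) :
    nrm (2 * l - x.1, x.2) < nrm x := by
  apply lt_of_pow_lt_pow_left₀ 2 (nrm_nonneg _)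
  rw [nrm_sq, nrm_sq]
  simp only
  nlinarith

lemma nrm_refl_le {l : ℝ} (hl : 0 < l) {x : ℝ × ℝ} (h : l ≤ x.1) :
    nrm (2 * l - x.1, x.2) ≤ nrm x := by
  rcases h.lt_or_eq with h | h
  · exact (nrm_refl_lt hl h).le
  · have : (2 * l - x.1, x.2) = x := by ext <;> simp; linarith
    rw [this]

lemma refl_ne_zero {l : ℝ} {x : ℝ × ℝ} (h : x ≠ (2 * l, 0)) : (2 * l - x.1, x.2) ≠ (0 : ℝ × ℝ) := by
  intro h0
  apply h
  rw [Prod.ext_iff] at h0 ⊢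
  simp at h0 ⊢
  exact ⟨by linarith, h0.2⟩

section
variable {n : ℕ} {A : Matrix (Fin n) (Fin n) ℝ} {β : Fin n → ℝ} {u : Fin n → ℝ × ℝ → ℝ}

lemma wf_continuous (hu : PDESolution A β u) (l : ℝ) (i : Fin n) : Continuous (wf u l i) := by
  have := hu.1 i
  unfold wf
  fun_prop

lemma wf_contDiffAt (hu : PDESolution A β u) {l : ℝ} (i : Fin n) {x : ℝ × ℝ}
    (hx : x ≠ 0) (he : x ≠ (2 * l, 0)) : ContDiffAt ℝ 2 (wf u l i) x :=
  (contDiffAt_reflect (hu.2.1 i _ (refl_ne_zero he))).sub (hu.2.1 i x hx)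

lemma lap_wf (hu : PDESolution A β u) {l : ℝ} (i : Fin n) {x : ℝ × ℝ}
    (hx : x ≠ 0) (he : x ≠ (2 * l, 0)) :
    lap (wf u l i) x = - ∑ j, A i j * (Vf β u j (2 * l - x.1, x.2) - Vf β u j x) := by
  have h := lap_sub (contDiffAt_reflect (hu.2.1 i _ (refl_ne_zero he))) (hu.2.1 i x hx)
  have h' : lap (wf u l i) x = _ := h
  rw [h', lap_reflect, lap_u hu i hx, lap_u hu i (refl_ne_zero he)]
  simp only [mul_sub, Finset.sum_sub_distrib]
  ring

lemma Vf_diff_ge (hβ : ∀ i, -2 < β i ∧ β i ≤ 0) {l : ℝ} (hl : 0 < l) (j : Fin n) {x : ℝ × ℝ}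
    (hx : l < x.1) (he : x ≠ (2 * l, 0)) :
    Vf β u j x * wf u l j x ≤ Vf β u j (2 * l - x.1, x.2) - Vf β u j x := by
  have hx0 : 0 < nrm x := nrm_pos (ne_zero_of_fst_pos (hl.trans hx))
  have h0 := nrm_pos (refl_ne_zero he)
  have h1 : nrm x ^ β j ≤ nrm (2 * l - x.1, x.2) ^ β j :=
    Real.rpow_le_rpow_of_nonpos h0 (nrm_refl_lt hl hx).le (hβ j).2
  have h2 := mul_le_mul_of_nonneg_right h1 (Real.exp_pos (u j (2 * l - x.1, x.2))).le
  have h3 := Real.add_one_le_exp (wf u l j x)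
  have e : Real.exp (u j (2 * l - x.1, x.2)) = Real.exp (u j x) * Real.exp (wf u l j x) := by
    rw [← Real.exp_add]; congr 1; rw [wf]; ring
  have h4 := mul_le_mul_of_nonneg_left h3 (Vf_nonneg (β := β) (u := u) j x)
  have e2 : nrm x ^ β j * Real.exp (u j (2 * l - x.1, x.2)) =
    Vf β u j x * Real.exp (wf u l j x) := by rw [e, Vf]; ring
  have e3 : Vf β u j (2 * l - x.1, x.2) = nrm (2 * l - x.1, x.2) ^ β j *
    Real.exp (u j (2 * l - x.1, x.2)) := rfl
  linarith

lemma key (hA : ∀ i j, 0 ≤ A i j) (hβ : ∀ i, -2 < β i ∧ β i ≤ 0) (hu : PDESolution A β u)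
    (hn : 0 < n) :
    ∃ R > 0, ∀ l > 0, (∃ i x, l < x.1 ∧ wf u l i x < 0) →
      ∃ i x, l < x.1 ∧ wf u l i x < 0 ∧ nrm x ≤ R := by
  set CA : ℝ := 1 + ∑ i, ∑ j, A i j with hCA
  have hCA1 : 1 ≤ CA := by
    have : 0 ≤ ∑ i, ∑ j, A i j := Finset.sum_nonneg fun i _ => Finset.sum_nonneg fun j _ => hA i j
    linarith
  obtain ⟨R, hR, hreg⟩ := eps_reg hA hβ hu (show 0 < 1 / (16 * CA) by positivity)
  obtain ⟨C0, hC0, hup⟩ := u_upper hA hβ hu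
  obtain ⟨s, hs0, hs1, C, hC, hlow⟩ := u_lower hA hβ hu hn
  refine ⟨R, hR, fun l hl ⟨i0, x0, hx0, hw0⟩ => ?_⟩
  set q := - (wf u l i0 x0 / gb x0) with hq
  have hq0 : 0 < q := neg_pos.2 (div_neg_of_neg_of_pos hw0 (gb_pos _))
  -- decay at infinity
  have hdec : ∃ T : ℝ, ∀ i x, l ≤ x.1 → T ≤ nrm x → -q < wf u l i x / gb x := by
    set c := q * l ^ (1 / 2 : ℝ) with hc
    have hc0 : 0 < c := mul_pos hq0 (Real.rpow_pos_of_pos hl _)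
    have ht := (tendsto_rpow_atTop (show (0 : ℝ) < 1 / 16 by norm_num)).eventually_gt_atTop
      ((2 * C + C0) / c)
    obtain ⟨T, hT⟩ := eventually_atTop.1 (ht.and (eventually_ge_atTop (1 : ℝ)))
    refine ⟨T, fun i x hx hTx => ?_⟩
    obtain ⟨h1, h2⟩ := hT _ hTx
    rw [lt_div_iff₀ (gb_pos x)]
    rw [div_lt_iff₀ hc0] at h1
    have h3 : -(C * (1 + nrm x ^ s)) - C0 ≤ wf u l i x := by
      have a1 := hlow i (2 * l - x.1, x.2)
      have a2 := hup i x
      have a3 := Real.rpow_le_rpow (nrm_nonneg _) (nrm_refl_le hl hx) hs0.le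
      have a4 := mul_le_mul_of_nonneg_left a3 hC
      rw [wf]; linarith
    set t := nrm x ^ (1 / 16 : ℝ) with htdef
    have ht1 : 1 ≤ t := Real.one_le_rpow h2 (by norm_num)
    have hts : nrm x ^ s ≤ t := Real.rpow_le_rpow_of_exponent_le h2 hs1
    have htt : nrm x ^ (1 / 8 : ℝ) = t * t := by
      rw [htdef, ← Real.rpow_add (by linarith)]; norm_num
    have h5 := mul_le_mul_of_nonneg_left (gb_ge hl hx) hq0.le
    rw [htt] at h5
    have h6 : C * (1 + nrm x ^ s) ≤ C * (t + t) := mul_le_mul_of_nonneg_left (by linarith) hC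
    have h7 : C0 ≤ C0 * t := le_mul_of_one_le_right hC0 ht1
    have h8 : (2 * C + C0) * t < t * c * t := mul_lt_mul_of_pos_right h1 (by linarith)
    have h9 : q * (l ^ (1 / 2 : ℝ) * (t * t)) = t * c * t := by rw [hc]; ring
    linarith
  obtain ⟨T, hT⟩ := hdec
  set T' := max T (nrm x0) with hT'
  set K := {x : ℝ × ℝ | d2 0 x ≤ T' ^ 2} ∩ {x | l ≤ x.1} with hK
  have hKc : IsCompact K :=
    (isCompact_disc 0 _).inter_right (isClosed_le continuous_const continuous_fst)
  have hT'0 : 0 ≤ T' := (nrm_nonneg x0).trans (le_max_right _ _)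
  have hKmem : ∀ x, l ≤ x.1 → nrm x ≤ T' → x ∈ K := by
    intro x h1 h2
    refine ⟨?_, h1⟩
    show d2 0 x ≤ T' ^ 2
    rw [← nrm_sq_d2]
    exact pow_le_pow_left₀ (nrm_nonneg _) h2 2
  have hx0K : x0 ∈ K := hKmem x0 hx0.le (le_max_right _ _)
  have hQc : ∀ i, ContinuousOn (fun x => wf u l i x / gb x) K := by
    intro i x hx
    have hx1 : 0 < x.1 := hl.trans_le hx.2
    exact ((wf_continuous hu l i).continuousAt.div (gb_contDiffAt hx1).continuousAt
      (gb_pos x).ne').continuousWithinAt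
  have hmin : ∀ i, ∃ y ∈ K, IsMinOn (fun x => wf u l i x / gb x) K y := fun i =>
    hKc.exists_isMinOn ⟨x0, hx0K⟩ (hQc i)
  choose ys hysK hysmin using hmin
  have : Nonempty (Fin n) := ⟨i0⟩
  obtain ⟨im, him⟩ := Finite.exists_min (fun i => wf u l i (ys i) / gb (ys i))
  set y := ys im with hy
  set m := - (wf u l im y / gb y) with hm
  have hqm : q ≤ m := by
    have h1 := him i0
    have h2 : wf u l i0 (ys i0) / gb (ys i0) ≤ wf u l i0 x0 / gb x0 := hysmin i0 hx0K
    rw [hm, hq]; linarith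
  have hm0 : 0 < m := hq0.trans_le hqm
  have hglob : ∀ i x, l ≤ x.1 → 0 ≤ wf u l i x + m * gb x := by
    intro i x hx
    have h1 : -m ≤ wf u l i x / gb x := by
      by_cases hxT : nrm x ≤ T'
      · have h1 := him i
        have h2 : wf u l i (ys i) / gb (ys i) ≤ wf u l i x / gb x := hysmin i (hKmem x hx hxT)
        rw [hm]; linarith
      · have := hT i x hx ((le_max_left _ _).trans (not_le.1 hxT).le)
        linarith
    rw [le_div_iff₀ (gb_pos x)] at h1
    linarith
  have hyeq : wf u l im y + m * gb y = 0 := by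
    have := (gb_pos y).ne'
    rw [hm]; field_simp; ring
  have hyneg : wf u l im y < 0 := by
    have := mul_pos hm0 (gb_pos y)
    linarith
  have hy1 : l < y.1 := by
    rcases (show l ≤ y.1 from (hysK im).2).lt_or_eq with h | h
    · exact h
    · exfalso
      have h : l = y.1 := h
      have : (2 * l - y.1, y.2) = y := by ext <;> simp; linarith
      rw [wf, this] at hyneg
      linarith
  refine ⟨im, y, hy1, hyneg, ?_⟩
  by_contra hyR
  push Not at hyR
  set Ω := {x : ℝ × ℝ | l < x.1} ∩ {x | R < nrm x} with hΩ
  have hΩo : IsOpen Ω := (isOpen_lt continuous_const continuous_fst).inter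
    (isOpen_lt continuous_const continuous_nrm)
  set z : ℝ × ℝ → ℝ := fun x => wf u l im x + m * gb x with hz
  have hlz : ∀ x ∈ Ω, x ≠ (2 * l, 0) → ContDiffAt ℝ 2 z x ∧ lap z x < 0 := by
    intro x hx he
    have hx1 : l < x.1 := hx.1
    have hxR : R < nrm x := hx.2
    have hxpos : 0 < x.1 := hl.trans hx1
    have hxne := ne_zero_of_fst_pos hxpos
    have hnp := nrm_pos hxne
    have c1 := wf_contDiffAt hu im hxne he
    have c2 : ContDiffAt ℝ 2 (fun x => m * gb x) x := contDiffAt_const.mul (gb_contDiffAt hxpos)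
    refine ⟨c1.add c2, ?_⟩
    have e1 : lap z x = lap (wf u l im) x + m * lap gb x := by
      rw [← lap_const_mul]; exact lap_add c1 c2
    rw [e1, lap_wf hu im hxne he]
    have h1 : ∀ j, A im j * (-(1 / (16 * CA) * (m * (gb x / nrm x ^ 2))))
        ≤ A im j * (Vf β u j (2 * l - x.1, x.2) - Vf β u j x) := by
      intro j
      apply mul_le_mul_of_nonneg_left _ (hA im j)
      refine le_trans ?_ (Vf_diff_ge hβ hl j hx1 he)
      have b1 := hreg x hxR.le j
      have b2 : Vf β u j x ≤ 1 / (16 * CA) / nrm x ^ 2 := by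
        rw [le_div_iff₀ (by positivity)]; linarith
      have b3 := hglob j x hx1.le
      have b4 : Vf β u j x * (-(m * gb x)) ≤ Vf β u j x * wf u l j x :=
        mul_le_mul_of_nonneg_left (by linarith) (Vf_nonneg j x)
      have b5 : Vf β u j x * (m * gb x) ≤ 1 / (16 * CA) / nrm x ^ 2 * (m * gb x) :=
        mul_le_mul_of_nonneg_right b2 (mul_pos hm0 (gb_pos x)).le
      have b6 : 1 / (16 * CA) / nrm x ^ 2 * (m * gb x)
        = 1 / (16 * CA) * (m * (gb x / nrm x ^ 2)) := by ring
      linarith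
    have h2 := Finset.sum_le_sum (fun j (_ : j ∈ Finset.univ) => h1 j)
    rw [← Finset.sum_mul] at h2
    set G := m * (gb x / nrm x ^ 2) with hG
    have hG0 : 0 < G := mul_pos hm0 (div_pos (gb_pos x) (by positivity))
    have h3 : (∑ j, A im j) * (1 / (16 * CA) * G) ≤ CA * (1 / (16 * CA) * G) :=
      mul_le_mul_of_nonneg_right (rowsum_le hA im) (by positivity)
    have h4 : CA * (1 / (16 * CA) * G) = G / 16 := by field_simp
    have h5 := mul_le_mul_of_nonneg_left (lap_gb_le hxpos) hm0.le
    have h6 : m * (- (7 / 64) * (gb x / nrm x ^ 2)) = - (7 / 64) * G := by rw [hG]; ring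
    linarith
  have hzc : ContinuousOn z Ω := by
    intro x hx
    have hx1 : 0 < x.1 := hl.trans hx.1
    exact ((wf_continuous hu l im).continuousAt.add
      (continuousAt_const.mul (gb_contDiffAt hx1).continuousAt)).continuousWithinAt
  have hyΩ : y ∈ Ω := ⟨hy1, hyR⟩
  have hsm := strong_min_local hΩo hzc (fun x hx => hglob im x hx.1.le)
    (fun x hx he => ⟨(hlz x hx he).1, (hlz x hx he).2.le⟩) hyΩ hyeq
  -- pick a nearby point different from the exceptional one
  have hne : ∃ x ∈ Ω, x ≠ (2 * l, 0) ∧ ∀ᶠ x' in 𝓝 x, z x' = 0 := by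
    have h1 := (hsm.eventually_nhds).and (hΩo.mem_nhds hyΩ)
    by_cases hye : y = (2 * l, 0)
    · have h2 : ∀ᶠ x in 𝓝[≠] y, (∀ᶠ x' in 𝓝 x, z x' = 0) ∧ x ∈ Ω := h1.filter_mono nhdsWithin_le_nhds
      obtain ⟨x, ⟨hx1, hx2⟩, hx3⟩ := (h2.and self_mem_nhdsWithin).exists
      exact ⟨x, hx2, by rw [← hye]; exact hx3, hx1⟩
    · exact ⟨y, hyΩ, hye, hsm⟩
  obtain ⟨x, hxΩ, hxe, hxz⟩ := hne
  have h1 := (hlz x hxΩ hxe).2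
  rw [lap_congr (g := fun _ => 0) hxz, lap_const] at h1
  exact lt_irrefl _ h1

end

open Filter Topology

section
variable {n : ℕ} {A : Matrix (Fin n) (Fin n) ℝ} {β : Fin n → ℝ} {u : Fin n → ℝ × ℝ → ℝ}

lemma Vf_diff_nonneg (hβ : ∀ i, -2 < β i ∧ β i ≤ 0) {l : ℝ} (hl : 0 < l) (j : Fin n)
    {x : ℝ × ℝ} (hw : 0 ≤ wf u l j x)
    (hx : l < x.1) (he : x ≠ (2 * l, 0)) :
    0 ≤ Vf β u j (2 * l - x.1, x.2) - Vf β u j x :=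
  le_trans (mul_nonneg (Vf_nonneg j x) hw) (Vf_diff_ge hβ hl j hx he)

lemma lap_wf_nonpos (hA : ∀ i j, 0 ≤ A i j) (hβ : ∀ i, -2 < β i ∧ β i ≤ 0)
    (hu : PDESolution A β u) {l : ℝ} (hl : 0 < l)
    (hw : ∀ i x, l < x.1 → 0 ≤ wf u l i x) (i : Fin n) {x : ℝ × ℝ}
    (hx : l < x.1) (he : x ≠ (2 * l, 0)) : lap (wf u l i) x ≤ 0 := by
  rw [lap_wf hu i (ne_zero_of_fst_pos (hl.trans hx)) he]
  have := Finset.sum_nonneg fun j (_ : j ∈ Finset.univ) =>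
    mul_nonneg (hA i j) (Vf_diff_nonneg hβ hl j (hw j x hx) hx he)
  linarith

lemma wf_zero_all (hA : ∀ i j, 0 ≤ A i j) (hβ : ∀ i, -2 < β i ∧ β i ≤ 0)
    (hu : PDESolution A β u) {l : ℝ} (hl : 0 < l)
    (hw : ∀ i x, l < x.1 → 0 ≤ wf u l i x) (i : Fin n) {q : ℝ × ℝ}
    (hq : l < q.1) (hq0 : wf u l i q = 0) : ∀ x : ℝ × ℝ, l < x.1 → wf u l i x = 0 := by
  set Ω := {x : ℝ × ℝ | l < x.1} with hΩ
  have hΩo : IsOpen Ω := isOpen_lt continuous_const continuous_fst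
  have hΩc : IsPreconnected Ω := by
    apply Convex.isPreconnected
    exact convex_halfSpace_gt (f := Prod.fst) (LinearMap.fst ℝ ℝ ℝ).isLinear l
  have hloc : ∀ x ∈ Ω, wf u l i x = 0 → ∀ᶠ y in 𝓝 x, wf u l i y = 0 := by
    intro x hx hx0
    exact strong_min_local (e := (2 * l, 0)) hΩo (wf_continuous hu l i).continuousOn
      (fun y hy => hw i y hy)
      (fun y hy he => ⟨wf_contDiffAt hu i (ne_zero_of_fst_pos (hl.trans hy)) he,
        lap_wf_nonpos hA hβ hu hl hw i hy he⟩) hx hx0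
  have hU : IsOpen {x | ∀ᶠ y in 𝓝 x, wf u l i y = 0} := isOpen_setOfPred_eventually_nhds
  have hV : IsOpen {x | wf u l i x ≠ 0} := isOpen_ne.preimage (wf_continuous hu l i)
  have hsub := hΩc.subset_left_of_subset_union hU hV
    (by
      rw [Set.disjoint_left]
      intro x hx hx'
      exact hx' hx.self_of_nhds)
    (by
      intro x hx
      by_cases h : wf u l i x = 0
      · exact Or.inl (hloc x hx h)
      · exact Or.inr h)
    ⟨q, hq, hloc q hq hq0⟩
  intro x hx
  exact (hsub hx).self_of_nhds

lemma wf_pos_of_nonneg (hA : H1 A) (hβ : ∀ i, -2 < β i ∧ β i ≤ 0) (hβ0 : ∃ i, β i ≠ 0)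
    (hu : PDESolution A β u) {l : ℝ} (hl : 0 < l)
    (hw : ∀ i x, l < x.1 → 0 ≤ wf u l i x) (i : Fin n) (x : ℝ × ℝ) (hx : l < x.1) :
    0 < wf u l i x := by
  classical
  obtain ⟨-, hAn, hirr, hdet⟩ := hA
  rcases (hw i x hx).lt_or_eq with h | h
  · exact h
  exfalso
  set P : ℝ × ℝ := (3 * l, 0) with hP
  have hPl : l < P.1 := by simp only [hP]; linarith
  have hPe : P ≠ (2 * l, 0) := by
    intro h
    have := congrArg Prod.fst h
    simp only [hP] at this
    linarith
  have hPne := ne_zero_of_fst_pos (hl.trans hPl)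
  have hprop : ∀ i, wf u l i P = 0 → ∀ j, A i j ≠ 0 → wf u l j P = 0 ∧ β j = 0 := by
    intro i hi j hij
    have hall := wf_zero_all hAn hβ hu hl hw i hPl hi
    have hev : wf u l i =ᶠ[𝓝 P] fun _ => 0 := by
      filter_upwards [(isOpen_lt continuous_const continuous_fst).mem_nhds hPl] with y hy
      exact hall y hy
    have hlap := lap_wf hu i hPne hPe
    rw [lap_congr hev, lap_const] at hlap
    have hsum : ∑ j, A i j * (Vf β u j (2 * l - P.1, P.2) - Vf β u j P) = 0 := by linarith
    have hz := (Finset.sum_eq_zero_iff_of_nonneg fun j _ =>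
      mul_nonneg (hAn i j) (Vf_diff_nonneg hβ hl j (hw j P hPl) hPl hPe)).1 hsum j
        (Finset.mem_univ j)
    have hd : Vf β u j (2 * l - P.1, P.2) - Vf β u j P = 0 :=
      (mul_eq_zero.1 hz).resolve_left hij
    have h1 := Vf_diff_ge (u := u) hβ hl j hPl hPe
    rw [hd] at h1
    have hVp : 0 < Vf β u j P := Vf_pos j hPne
    have hwj : wf u l j P = 0 := by
      apply le_antisymm _ (hw j P hPl)
      by_contra hc
      have := mul_pos hVp (not_le.1 hc)
      linarith
    refine ⟨hwj, ?_⟩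
    by_contra hb
    have hb' : β j < 0 := lt_of_le_of_ne (hβ j).2 hb
    have h2 := Real.rpow_lt_rpow_of_neg (nrm_pos (refl_ne_zero hPe)) (nrm_refl_lt hl hPl) hb'
    have h3 : u j (2 * l - P.1, P.2) = u j P := by rw [wf] at hwj; linarith
    rw [Vf, Vf, h3, ← sub_mul] at hd
    have := mul_pos (sub_pos.2 h2) (Real.exp_pos (u j P))
    linarith
  have hiP : wf u l i P = 0 := wf_zero_all hAn hβ hu hl hw i hx h.symm P hPl
  have hS : (Finset.univ.filter fun i => wf u l i P = 0) = Finset.univ := by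
    by_contra hne
    obtain ⟨i', hi', j, hj, hij⟩ := hirr _ ⟨i, by simp [hiP]⟩ hne
    simp only [Finset.mem_filter, Finset.mem_univ, true_and, Finset.mem_compl] at hi' hj
    exact hj (hprop i' hi' j hij).1
  obtain ⟨j0, hj0⟩ := hβ0
  have hcol : ∀ i, A i j0 = 0 := by
    intro i
    by_contra hij
    have hi : i ∈ (Finset.univ.filter fun i => wf u l i P = 0) := by rw [hS]; exact Finset.mem_univ i
    exact hj0 (hprop i (Finset.mem_filter.1 hi).2 j0 hij).2
  rw [Matrix.det_eq_zero_of_column_eq_zero j0 hcol] at hdet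
  exact not_isUnit_zero hdet

end

open Filter Topology

section
variable {n : ℕ} {A : Matrix (Fin n) (Fin n) ℝ} {β : Fin n → ℝ} {u : Fin n → ℝ × ℝ → ℝ}

lemma wf_bdry (l : ℝ) (i : Fin n) {x : ℝ × ℝ} (h : x.1 = l) : wf u l i x = 0 := by
  have : (2 * l - x.1, x.2) = x := by ext <;> simp; linarith
  rw [wf, this, sub_self]

lemma hopf (hA : ∀ i j, 0 ≤ A i j) (hβ : ∀ i, -2 < β i ∧ β i ≤ 0)
    (hu : PDESolution A β u) {l : ℝ} (hl : 0 < l)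
    (hw : ∀ i x, l < x.1 → 0 < wf u l i x) (i : Fin n) (y : ℝ) :
    deriv (fun s => u i (s, y)) l < 0 := by
  have hw0 : ∀ i x, l < x.1 → 0 ≤ wf u l i x := fun i x hx => (hw i x hx).le
  have hne : ((l, y) : ℝ × ℝ) ≠ 0 := ne_zero_of_fst_pos hl
  have hdf : DifferentiableAt ℝ (fun s => u i (s, y)) l := by
    have h1 : DifferentiableAt ℝ (u i) (l, y) := (hu.2.1 i _ hne).differentiableAt (by norm_num)
    exact DifferentiableAt.comp (g := u i) (f := fun s => (s, y)) l h1 (by fun_prop)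
  set d := deriv (fun s => u i (s, y)) l with hd
  have hder : HasDerivAt (fun s => u i (s, y)) d l := hdf.hasDerivAt
  set ρ := l / 4 with hρ
  have hρ0 : 0 < ρ := by positivity
  set p : ℝ × ℝ := (l + ρ, y) with hp
  have hd2 : ∀ x, d2 p x = (x.1 - (l + ρ)) ^ 2 + (x.2 - y) ^ 2 := fun x => rfl
  have hin : ∀ x, d2 p x < ρ ^ 2 → l < x.1 ∧ x.1 < 2 * l := by
    intro x hx
    rw [hd2] at hx
    have h1 : (x.1 - (l + ρ)) ^ 2 < ρ ^ 2 := by nlinarith [sq_nonneg (x.2 - y)]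
    have h2 := abs_lt_of_sq_lt_sq h1 hρ0.le
    rw [abs_lt] at h2
    constructor <;> linarith
  have hinle : ∀ x, d2 p x ≤ ρ ^ 2 → l ≤ x.1 := by
    intro x hx
    rw [hd2] at hx
    have h1 : (x.1 - (l + ρ)) ^ 2 ≤ ρ ^ 2 := by nlinarith [sq_nonneg (x.2 - y)]
    have h2 := abs_le_of_sq_le_sq h1 hρ0.le
    linarith [(abs_le.1 h2).1]
  have hab : (ρ / 2) ^ 2 < ρ ^ 2 := by nlinarith
  obtain ⟨ym, hymK, hymin⟩ := (isCompact_disc p ((ρ / 2) ^ 2)).exists_isMinOn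
    ⟨p, by show d2 p p ≤ _; rw [d2_self]; positivity⟩ (wf_continuous hu l i).continuousOn
  have hymK : d2 p ym ≤ (ρ / 2) ^ 2 := hymK
  set m := wf u l i ym with hm
  have hm0 : 0 < m := hw i ym (hin ym (by linarith)).1
  have hbar := annulus_barrier (p := p) (a := (ρ / 2) ^ 2) (b := ρ ^ 2) (m := m) (z := wf u l i)
    (by positivity) hab hm0.le (wf_continuous hu l i).continuousOn
    (by
      intro x hx
      rcases (hinle x hx.le).lt_or_eq with h | h
      · exact hw0 i x h
      · rw [wf_bdry l i h.symm])
    (fun x hx => hymin hx.le)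
    (by
      intro x _ hx
      obtain ⟨h1, h2⟩ := hin x hx
      have he : x ≠ (2 * l, 0) := by rintro rfl; exact lt_irrefl _ h2
      exact ⟨wf_contDiffAt hu i (ne_zero_of_fst_pos (hl.trans h1)) he,
        lap_wf_nonpos hA hβ hu hl hw0 i h1 he⟩)
  set c0 := m / Real.log (ρ ^ 2 / (ρ / 2) ^ 2) with hc0
  have hc0pos : 0 < c0 := by
    apply div_pos hm0
    apply Real.log_pos
    rw [lt_div_iff₀ (by positivity)]; linarith
  have hlow : ∀ t, 0 < t → t < ρ / 2 → 2 * c0 / ρ * t ≤ wf u l i (l + t, y) := by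
    intro t ht0 ht
    have hpt : 0 < ρ - t := by linarith
    have e : d2 p (l + t, y) = (ρ - t) ^ 2 := by rw [hd2]; ring
    have h1 := hbar (l + t, y) (by rw [e]; exact pow_le_pow_left₀ (by positivity) (by linarith) 2)
      (by rw [e]; exact pow_le_pow_left₀ hpt.le (by linarith) 2)
    rw [e, Real.log_pow, Real.log_pow] at h1
    have h2 : Real.log ((ρ - t) / ρ) ≤ (ρ - t) / ρ - 1 :=
      Real.log_le_sub_one_of_pos (by positivity)
    rw [Real.log_div hpt.ne' hρ0.ne'] at h2
    have h3 : (ρ - t) / ρ - 1 = - (t / ρ) := by field_simp; ring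
    have h4 : t / ρ ≤ Real.log ρ - Real.log (ρ - t) := by linarith
    have h5 := mul_le_mul_of_nonneg_left h4 (show 0 ≤ 2 * c0 by positivity)
    push_cast at h1
    calc 2 * c0 / ρ * t = 2 * c0 * (t / ρ) := by ring
      _ ≤ _ := h5
      _ = c0 * (2 * Real.log ρ - 2 * Real.log (ρ - t)) := by ring
      _ ≤ _ := h1
  have hφ : HasDerivAt (fun t => wf u l i (l + t, y)) (-d - d) 0 := by
    have g1 : HasDerivAt (fun t => u i (l - t, y)) (-d) 0 := by
      have := HasDerivAt.comp_const_sub (f := fun s => u i (s, y)) (f' := d) l 0 (by simpa using hder)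
      exact this
    have g2 : HasDerivAt (fun t => u i (l + t, y)) d 0 := by
      have := HasDerivAt.comp_const_add (f := fun s => u i (s, y)) (f' := d) l 0 (by simpa using hder)
      exact this
    have g3 := g1.sub g2
    have e : (fun t => wf u l i (l + t, y)) = (fun t => u i (l - t, y) - u i (l + t, y)) := by
      funext t
      simp only [wf]
      congr 3; ring
    rw [e]; exact g3
  have hslope := hφ.tendsto_slope_zero_right
  have hge : 2 * c0 / ρ ≤ -d - d := by
    apply ge_of_tendsto hslope
    have : Ioo (0 : ℝ) (ρ / 2) ∈ 𝓝[>] (0 : ℝ) := Ioo_mem_nhdsGT (by positivity)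
    filter_upwards [this] with t ht
    have h1 := hlow t ht.1 ht.2
    have h2 : wf u l i (l + 0, y) = 0 := wf_bdry l i (by simp)
    rw [zero_add, h2, sub_zero, smul_eq_mul, inv_mul_eq_div, le_div_iff₀ ht.1]
    exact h1
  have : 0 < 2 * c0 / ρ := by positivity
  linarith

end

open Filter Topology

section
variable {n : ℕ} {A : Matrix (Fin n) (Fin n) ℝ} {β : Fin n → ℝ} {u : Fin n → ℝ × ℝ → ℝ}

lemma fst_le_nrm (x : ℝ × ℝ) : x.1 ≤ nrm x := by
  apply Real.le_sqrt_of_sq_le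
  nlinarith [sq_nonneg x.2]

lemma wf_nonneg_near (hu : PDESolution A β u) {l : ℝ} (hl : 0 < l) (i : Fin n)
    (hw : ∀ x : ℝ × ℝ, l < x.1 → 0 < wf u l i x)
    (hd : ∀ y : ℝ, deriv (fun s => u i (s, y)) l < 0) (xb : ℝ × ℝ) :
    ∀ᶠ z : ℝ × (ℝ × ℝ) in 𝓝 (l, xb), z.1 < z.2.1 → 0 ≤ wf u z.1 i z.2 := by
  have hc := hu.1 i
  rcases lt_trichotomy xb.1 l with h | h | h
  · have ho : IsOpen {z : ℝ × (ℝ × ℝ) | z.2.1 < z.1} := isOpen_lt (by fun_prop) (by fun_prop)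
    filter_upwards [ho.mem_nhds (show xb.1 < l from h)] with z hz h1
    have hz : z.2.1 < z.1 := hz
    linarith
  · obtain ⟨x1, y⟩ := xb
    have h : x1 = l := h
    subst h
    have hne : ((x1, y) : ℝ × ℝ) ≠ 0 := ne_zero_of_fst_pos hl
    have hcd := hu.2.1 i _ hne
    have hfc : ContinuousAt (fun x => fderiv ℝ (u i) x (1, 0)) (x1, y) :=
      (hcd.continuousAt_fderiv (by norm_num)).clm_apply continuousAt_const
    have hdd : ∀ x : ℝ × ℝ, DifferentiableAt ℝ (u i) x →
        HasDerivAt (fun s => u i (s, x.2)) (fderiv ℝ (u i) x (1, 0)) x.1 := by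
      intro x hx
      have h1 : HasDerivAt (fun s : ℝ => (s, x.2)) ((1 : ℝ), (0 : ℝ)) x.1 :=
        (hasDerivAt_id x.1).prodMk (hasDerivAt_const x.1 x.2)
      exact HasFDerivAt.comp_hasDerivAt (l := u i) x.1 hx.hasFDerivAt h1
    have hneg : fderiv ℝ (u i) (x1, y) (1, 0) < 0 := by
      have := hdd (x1, y) (hcd.differentiableAt (by norm_num))
      have h2 := hd y
      rwa [this.deriv] at h2
    have hev : ∀ᶠ x in 𝓝 ((x1, y) : ℝ × ℝ), fderiv ℝ (u i) x (1, 0) < 0 ∧ x ≠ 0 :=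
      (hfc.eventually (gt_mem_nhds hneg)).and (isOpen_ne.mem_nhds hne)
    obtain ⟨ε, hε, hball⟩ := Metric.eventually_nhds_iff.1 hev
    have hbox : ∀ s t : ℝ, |s - x1| < ε → |t - y| < ε →
        fderiv ℝ (u i) (s, t) (1, 0) < 0 ∧ ((s, t) : ℝ × ℝ) ≠ 0 := by
      intro s t hs ht
      apply hball
      rw [Prod.dist_eq]
      exact max_lt hs ht
    have hanti : ∀ t : ℝ, |t - y| < ε →
        StrictAntiOn (fun s => u i (s, t)) (Metric.ball x1 ε) := by
      intro t ht
      apply strictAntiOn_of_deriv_neg (convex_ball x1 ε)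
      · exact (hc.comp (by fun_prop : Continuous fun s : ℝ => (s, t))).continuousOn
      · intro s hs
        rw [Metric.isOpen_ball.interior_eq] at hs
        have hb := hbox s t hs ht
        have := hdd (s, t) ((hu.2.1 i _ hb.2).differentiableAt (by norm_num))
        rw [this.deriv]
        exact hb.1
    have o1 : IsOpen {z : ℝ × (ℝ × ℝ) | |z.1 - x1| < ε / 4} :=
      isOpen_lt (by fun_prop) (by fun_prop)
    have o2 : IsOpen {z : ℝ × (ℝ × ℝ) | |z.2.1 - x1| < ε / 4} :=
      isOpen_lt (by fun_prop) (by fun_prop)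
    have o3 : IsOpen {z : ℝ × (ℝ × ℝ) | |z.2.2 - y| < ε} :=
      isOpen_lt (by fun_prop) (by fun_prop)
    filter_upwards [o1.mem_nhds (show |x1 - x1| < ε / 4 by simpa using hε),
      o2.mem_nhds (show |x1 - x1| < ε / 4 by simpa using hε),
      o3.mem_nhds (show |y - y| < ε by simpa using hε)] with z h1 h2 h3 hz
    have h1 : |z.1 - x1| < ε / 4 := h1
    have h2 : |z.2.1 - x1| < ε / 4 := h2
    have h3 : |z.2.2 - y| < ε := h3
    rw [abs_lt] at h1 h2
    have m1 : z.2.1 ∈ Metric.ball x1 ε := by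
      rw [Metric.mem_ball, Real.dist_eq, abs_lt]; constructor <;> linarith
    have m2 : 2 * z.1 - z.2.1 ∈ Metric.ball x1 ε := by
      rw [Metric.mem_ball, Real.dist_eq, abs_lt]; constructor <;> linarith
    have := hanti z.2.2 h3 m2 m1 (by linarith)
    simp only at this
    exact sub_nonneg.2 this.le
  · have hcw : Continuous fun z : ℝ × (ℝ × ℝ) => wf u z.1 i z.2 := by
      unfold wf; fun_prop
    have ho : IsOpen {z : ℝ × (ℝ × ℝ) | 0 < wf u z.1 i z.2} := isOpen_lt continuous_const hcw
    filter_upwards [ho.mem_nhds (show 0 < wf u l i xb from hw xb h)] with z hz _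
    exact le_of_lt hz

lemma moving_plane_aux (hn : 0 < n) (hA : H1 A) (hβ : ∀ i, -2 < β i ∧ β i ≤ 0)
    (hβ0 : ∃ i, β i ≠ 0) (hu : PDESolution A β u) :
    sInf {l : ℝ | 0 < l ∧ ∀ μ ≥ l, ∀ i x, μ < x.1 → 0 < wf u μ i x} = 0 ∧
      ∀ μ > 0, ∀ i x, μ < x.1 → 0 < wf u μ i x := by
  obtain ⟨R, hR, hkey⟩ := key hA.2.1 hβ hu hn
  set S := {l : ℝ | 0 < l ∧ ∀ μ ≥ l, ∀ i x, μ < x.1 → 0 < wf u μ i x} with hS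
  have hnn : ∀ μ > 0, (∀ x, nrm x ≤ R → ∀ i, μ < x.1 → 0 ≤ wf u μ i x) →
      ∀ i x, μ < x.1 → 0 < wf u μ i x := by
    intro μ hμ h
    apply wf_pos_of_nonneg hA hβ hβ0 hu hμ
    intro i x hx
    by_contra hc
    obtain ⟨i', x', h1, h2, h3⟩ := hkey μ hμ ⟨i, x, hx, not_le.1 hc⟩
    have := h x' h3 i' h1
    linarith
  have hRS : R ∈ S := by
    refine ⟨hR, fun μ hμ => hnn μ (hR.trans_le hμ) ?_⟩
    intro x hx i hx1
    have := fst_le_nrm x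
    linarith
  have hbdd : BddBelow S := ⟨0, fun l hl => hl.1.le⟩
  have hL0 : 0 ≤ sInf S := le_csInf ⟨R, hRS⟩ fun l hl => hl.1.le
  set L := sInf S with hL
  have habove : ∀ μ > L, ∀ i x, μ < x.1 → 0 < wf u μ i x := by
    intro μ hμ
    obtain ⟨t, ht, htμ⟩ := exists_lt_of_csInf_lt ⟨R, hRS⟩ hμ
    exact ht.2 μ htμ.le
  have hLz : L = 0 := by
    by_contra hne
    have hLpos : 0 < L := lt_of_le_of_ne hL0 (Ne.symm hne)
    have hLnn : ∀ i x, L < x.1 → 0 ≤ wf u L i x := by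
      intro i x hx
      have hc : Continuous fun μ => wf u μ i x := by
        have := hu.1 i
        unfold wf; fun_prop
      have ht : Tendsto (fun μ => wf u μ i x) (𝓝[>] L) (𝓝 (wf u L i x)) :=
        hc.continuousAt.tendsto.mono_left nhdsWithin_le_nhds
      apply ge_of_tendsto ht
      filter_upwards [Ioo_mem_nhdsGT hx] with μ hμ
      exact (habove μ hμ.1 i x hμ.2).le
    have hLP := wf_pos_of_nonneg hA hβ hβ0 hu hLpos hLnn
    have hK : IsCompact {x : ℝ × ℝ | nrm x ≤ R} := by
      have e : {x : ℝ × ℝ | nrm x ≤ R} = {x | d2 0 x ≤ R ^ 2} := by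
        ext x
        show nrm x ≤ R ↔ d2 0 x ≤ R ^ 2
        rw [nrm_le_of_d2 hR.le, sub_zero]
      rw [e]; exact isCompact_disc 0 _
    have hev : ∀ᶠ μ in 𝓝 L, ∀ x ∈ {x : ℝ × ℝ | nrm x ≤ R}, ∀ i, μ < x.1 → 0 ≤ wf u μ i x := by
      apply hK.eventually_forall_of_forall_eventually
      intro x _
      apply eventually_all.2
      intro i
      exact wf_nonneg_near hu hLpos i (hLP i) (hopf hA.2.1 hβ hu hLpos hLP i) x
    have hev2 := hev.and (lt_mem_nhds hLpos)
    obtain ⟨ε, hε, hball⟩ := Metric.eventually_nhds_iff.1 hev2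
    have hball' : ∀ μ, L - ε < μ → μ ≤ L → 0 < μ ∧ ∀ i x, μ < x.1 → 0 < wf u μ i x := by
      intro μ h1 h2
      have := hball (y := μ) (by rw [Real.dist_eq, abs_lt]; constructor <;> linarith)
      exact ⟨this.2, hnn μ this.2 this.1⟩
    have hmem : L - ε / 2 ∈ S := by
      refine ⟨(hball' _ (by linarith) (by linarith)).1, fun μ hμ => ?_⟩
      rcases le_or_gt μ L with h | h
      · exact (hball' μ (by linarith) h).2
      · exact habove μ h
    have := csInf_le hbdd hmem
    linarith
  exact ⟨hLz, fun μ hμ => habove μ (by rw [hLz]; exact hμ)⟩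

end

theorem moving_plane_infimum_zero {n : ℕ} (hn : 0 < n)
    (A : Matrix (Fin n) (Fin n) ℝ) (β : Fin n → ℝ)
    (hA : H1 A) (hβ : ∀ i, -2 < β i ∧ β i ≤ 0) (hβ0 : ∃ i, β i ≠ 0)
    (u : Fin n → ℝ × ℝ → ℝ) (hu : PDESolution A β u) :
    sInf {ℓ : ℝ | 0 < ℓ ∧ ∀ μ ≥ ℓ, ∀ i, ∀ x : ℝ × ℝ, μ < x.1 →
        0 < u i (2 * μ - x.1, x.2) - u i x} = 0 ∧
    ∀ i, ∀ x : ℝ × ℝ, 0 ≤ x.1 → u i (x.1, x.2) ≤ u i (-x.1, x.2) := by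
  obtain ⟨h1, h2⟩ := moving_plane_aux hn hA hβ hβ0 hu
  refine ⟨h1, ?_⟩
  intro i x hx
  rcases hx.lt_or_eq with hx | hx
  · have hc : Continuous fun μ : ℝ => u i (2 * μ - x.1, x.2) := by
      have := hu.1 i
      fun_prop
    have ht : Tendsto (fun μ : ℝ => u i (2 * μ - x.1, x.2)) (𝓝[>] 0) (𝓝 (u i (-x.1, x.2))) := by
      have := (hc.continuousAt (x := 0)).tendsto.mono_left (nhdsWithin_le_nhds (s := Ioi 0))
      simpa using this
    apply ge_of_tendsto ht
    filter_upwards [Ioo_mem_nhdsGT hx] with μ hμ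
    have := h2 μ hμ.1 i x hμ.2
    rw [wf] at this
    exact (sub_pos.1 this).le
  · rw [← hx, neg_zero]
end

section
/- Let A satisfy (H1), β_i > -2 for all i ∈ I, let u be a finite-energy radial solution of the singular Liouville system, and let k ≥ 1 be an integer. Suppose φ_k = (φ_{1,k},...,φ_{n,k}) satisfies φ_{i,k}'' + (1/r) φ_{i,k}' + Σ_{j∈I} a_{ij} r^{β_j} e^{u_j(r)} φ_{j,k} − (k²/r²) φ_{i,k} = 0 for r > 0, with |φ_{i,k}(r)| ≤ C r^k (1+r)^{-2k} for all r > 0. If there exists f = (f_1,...,f_n) with f_i'' + (1/r) f_i' − (k²/r²) f_i + Σ_{j=1}^n a_{ij} r^{β_j} e^{u_j(r)} f_j < 0 for r > 0, f_i(r) > 0 for all r > 0, lim_{r→0} f_i(r)/r^k = ∞, and lim_{r→∞} f_i(r) r^k = ∞ for every i ∈ I, then φ_{i,k} ≡ 0 for every i ∈ I. -/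
open Set MeasureTheory

/-- Radial solution of the singular Liouville system, with the finite-energy condition. -/
def RadialSolution {n : ℕ} (A : Matrix (Fin n) (Fin n) ℝ) (β : Fin n → ℝ)
    (u : Fin n → ℝ → ℝ) : Prop :=
  (∀ i, ∀ r > (0:ℝ), ContDiffAt ℝ 2 (u i) r) ∧
  (∀ i, ∀ r > (0:ℝ),
    deriv (deriv (u i)) r + (1 / r) * deriv (u i) r
      + ∑ j, A i j * r ^ β j * Real.exp (u j r) = 0) ∧
  (∀ i, IntegrableOn (fun r : ℝ => r ^ (β i + 1) * Real.exp (u i r)) (Set.Ioi 0))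

lemma aux_second_deriv {w : ℝ → ℝ} {r : ℝ} (hc : ContDiffAt ℝ 2 w r) (hm : IsLocalMin w r) :
    0 ≤ deriv (deriv w) r := by
  by_contra hneg
  push Not at hneg
  have hmax : IsLocalMax w r :=
    isLocalMax_of_deriv_deriv_neg hneg hm.deriv_eq_zero hc.continuousAt
  have hEq : w =ᶠ[nhds r] fun _ => w r := by
    filter_upwards [hm, hmax] with x h1 h2
    exact le_antisymm h2 h1
  have h2 : deriv (deriv w) r = 0 := by
    rw [hEq.deriv.deriv_eq]
    simp
  linarith

lemma aux_max {g : ℝ → ℝ} (hg : ContinuousOn g (Ioi 0))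
    (h0 : Filter.Tendsto g (nhdsWithin 0 (Ioi 0)) (nhds 0))
    (hi : Filter.Tendsto g Filter.atTop (nhds 0)) :
    ∃ x > (0:ℝ), ∀ r > (0:ℝ), g r ≤ max (g x) 0 := by
  by_cases hp : ∃ s > (0:ℝ), 0 < g s
  · obtain ⟨s, hs, hgs⟩ := hp
    have e0 := h0.eventually (gt_mem_nhds hgs)
    have ei := hi.eventually (gt_mem_nhds hgs)
    obtain ⟨a, ha, hae⟩ := mem_nhdsGT_iff_exists_Ioo_subset.mp e0
    obtain ⟨b, hb⟩ := Filter.eventually_atTop.mp ei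
    have ha : (0:ℝ) < a := ha
    have hsa : a ≤ s := by
      by_contra h
      have : g s < g s := hae ⟨hs, not_le.mp h⟩
      exact lt_irrefl _ this
    have hsb : s ≤ b := by
      by_contra h
      exact lt_irrefl _ (hb s (not_le.mp h).le)
    obtain ⟨x, hx, hxm⟩ := (isCompact_Icc (a := a) (b := b)).exists_isMaxOn ⟨s, hsa, hsb⟩
      (hg.mono fun y hy => lt_of_lt_of_le ha hy.1)
    have hsx : g s ≤ g x := hxm ⟨hsa, hsb⟩
    refine ⟨x, lt_of_lt_of_le ha hx.1, fun r hr => le_max_of_le_left ?_⟩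
    rcases lt_or_ge r a with h | h
    · have : g r < g s := hae ⟨hr, h⟩
      linarith
    rcases le_or_gt r b with h' | h'
    · exact hxm ⟨h, h'⟩
    · linarith [hb r h'.le]
  · push Not at hp
    exact ⟨1, one_pos, fun r hr => le_max_of_le_right (hp r hr)⟩

lemma aux_deriv {w : ℝ → ℝ} {r : ℝ} (hc : ContDiffAt ℝ 2 w r) :
    DifferentiableAt ℝ (deriv w) r := by
  have h : ContDiffAt ℝ 1 (fderiv ℝ w) r := hc.fderiv_right (by norm_num)
  exact (h.differentiableAt (by norm_num)).clm_apply (differentiableAt_const (1:ℝ))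

lemma aux_nonpos {n : ℕ} (hn : 0 < n) (V : Fin n → Fin n → ℝ → ℝ)
    (hV : ∀ i j, ∀ r > (0:ℝ), 0 ≤ V i j r)
    (k : ℕ)
    (φ : Fin n → ℝ → ℝ)
    (hφsmooth : ∀ i, ∀ r > (0:ℝ), ContDiffAt ℝ 2 (φ i) r)
    (hφeq : ∀ i, ∀ r > (0:ℝ),
      deriv (deriv (φ i)) r + (1 / r) * deriv (φ i) r
        + ∑ j, V i j r * φ j r
        - ((k : ℝ) ^ 2 / r ^ 2) * φ i r = 0)
    (C : ℝ)
    (hφbd : ∀ i, ∀ r > (0:ℝ), |φ i r| ≤ C * r ^ k / (1 + r) ^ (2 * k))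
    (f : Fin n → ℝ → ℝ)
    (hfsmooth : ∀ i, ∀ r > (0:ℝ), ContDiffAt ℝ 2 (f i) r)
    (hfineq : ∀ i, ∀ r > (0:ℝ),
      deriv (deriv (f i)) r + (1 / r) * deriv (f i) r
        - ((k : ℝ) ^ 2 / r ^ 2) * f i r
        + ∑ j, V i j r * f j r < 0)
    (hfpos : ∀ i, ∀ r > (0:ℝ), 0 < f i r)
    (hf0 : ∀ i, Filter.Tendsto (fun r : ℝ => f i r / r ^ k)
      (nhdsWithin 0 (Set.Ioi 0)) Filter.atTop)
    (hfinf : ∀ i, Filter.Tendsto (fun r : ℝ => f i r * r ^ k)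
      Filter.atTop Filter.atTop) :
    ∀ i, ∀ r > (0:ℝ), φ i r ≤ 0 := by
  have hC : 0 ≤ C := by
    have h := (abs_nonneg _).trans (hφbd ⟨0, hn⟩ 1 one_pos)
    by_contra hneg
    push Not at hneg
    have : C * 1 ^ k / (1 + 1) ^ (2 * k) < 0 := by
      apply div_neg_of_neg_of_pos
      · simpa using hneg
      · positivity
    linarith
  have b0 : ∀ i, ∀ r > (0:ℝ), |φ i r| ≤ C * r ^ k := fun i r hr => by
    refine (hφbd i r hr).trans (div_le_self (by positivity) (one_le_pow₀ (by linarith)))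
  have bi : ∀ i, ∀ r > (0:ℝ), |φ i r| * r ^ k ≤ C := fun i r hr => by
    have h1 := mul_le_mul_of_nonneg_right (hφbd i r hr) (pow_nonneg hr.le k)
    refine h1.trans ?_
    rw [div_mul_eq_mul_div, div_le_iff₀ (by positivity), mul_assoc, ← pow_add, ← two_mul]
    exact mul_le_mul_of_nonneg_left (pow_le_pow_left₀ hr.le (by linarith) _) hC
  have hmax : ∀ i, ∃ x > (0:ℝ), ∀ r > (0:ℝ), φ i r / f i r ≤ max (φ i x / f i x) 0 := by
    intro i
    apply aux_max (g := fun r => φ i r / f i r)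
    · intro r hr
      exact ((hφsmooth i r hr).continuousAt.div (hfsmooth i r hr).continuousAt
        (hfpos i r hr).ne').continuousWithinAt
    · have ht : Filter.Tendsto (fun r : ℝ => C * (f i r / r ^ k)⁻¹)
          (nhdsWithin 0 (Set.Ioi 0)) (nhds 0) := by
        simpa using (hf0 i).inv_tendsto_atTop.const_mul C
      refine squeeze_zero_norm' ?_ ht
      filter_upwards [self_mem_nhdsWithin] with r hr
      have hr : 0 < r := hr
      rw [Real.norm_eq_abs, abs_div, abs_of_pos (hfpos i r hr), inv_div, ← mul_div_assoc]
      exact div_le_div_of_nonneg_right (b0 i r hr) (hfpos i r hr).le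
    · have ht : Filter.Tendsto (fun r : ℝ => C * (f i r * r ^ k)⁻¹)
          Filter.atTop (nhds 0) := by
        simpa using (hfinf i).inv_tendsto_atTop.const_mul C
      refine squeeze_zero_norm' ?_ ht
      filter_upwards [Filter.eventually_gt_atTop 0] with r hr
      have hf := hfpos i r hr
      have hrk : 0 < r ^ k := pow_pos hr k
      rw [Real.norm_eq_abs, abs_div, abs_of_pos hf, ← div_eq_mul_inv,
        div_le_div_iff₀ hf (by positivity)]
      nlinarith [mul_le_mul_of_nonneg_right (bi i r hr) hf.le]
  choose x hx hxm using hmax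
  have : Nonempty (Fin n) := ⟨⟨0, hn⟩⟩
  obtain ⟨i0, hi0⟩ := Finite.exists_max fun i => φ i (x i) / f i (x i)
  obtain ⟨t, htdef⟩ : ∃ t, t = φ i0 (x i0) / f i0 (x i0) := ⟨_, rfl⟩
  have hall : ∀ j, ∀ r > (0:ℝ), φ j r / f j r ≤ max t 0 := fun j r hr => by
    rw [htdef]
    exact (hxm j r hr).trans (max_le_max (hi0 j) le_rfl)
  rcases le_or_gt t 0 with ht | ht
  · intro i r hr
    have h := hall i r hr
    rw [max_eq_right ht, div_le_iff₀ (hfpos i r hr)] at h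
    simpa using h
  exfalso
  rw [max_eq_left ht.le] at hall
  obtain ⟨r, hrdef⟩ : ∃ r, r = x i0 := ⟨_, rfl⟩
  have hr : 0 < r := hrdef ▸ hx i0
  rw [← hrdef] at htdef
  have hw : ∀ j, ∀ s > (0:ℝ), 0 ≤ t * f j s - φ j s := fun j s hs => by
    have h := hall j s hs
    rw [div_le_iff₀ (hfpos j s hs)] at h
    linarith
  have hw0 : t * f i0 r - φ i0 r = 0 := by
    rw [htdef, div_mul_cancel₀ _ (hfpos i0 r hr).ne', sub_self]
  have hcw : ContDiffAt ℝ 2 (fun s => t * f i0 s - φ i0 s) r :=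
    (contDiffAt_const.mul (hfsmooth i0 r hr)).sub (hφsmooth i0 r hr)
  have hm : IsLocalMin (fun s => t * f i0 s - φ i0 s) r := by
    filter_upwards [lt_mem_nhds hr] with s hs
    rw [hw0]
    exact hw i0 s hs
  have hd : ∀ s > (0:ℝ), deriv (fun s => t * f i0 s - φ i0 s) s
      = t * deriv (f i0) s - deriv (φ i0) s := fun s hs => by
    have h1 := (hfsmooth i0 s hs).differentiableAt (by norm_num)
    have h2 := (hφsmooth i0 s hs).differentiableAt (by norm_num)
    exact ((h1.hasDerivAt.const_mul t).sub h2.hasDerivAt).deriv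
  have hdd : deriv (deriv (fun s => t * f i0 s - φ i0 s)) r
      = t * deriv (deriv (f i0)) r - deriv (deriv (φ i0)) r := by
    have he : deriv (fun s => t * f i0 s - φ i0 s) =ᶠ[nhds r]
        fun s => t * deriv (f i0) s - deriv (φ i0) s := by
      filter_upwards [lt_mem_nhds hr] with s hs using hd s hs
    rw [he.deriv_eq]
    have h1 : DifferentiableAt ℝ (deriv (f i0)) r :=
      aux_deriv (hfsmooth i0 r hr)
    have h2 : DifferentiableAt ℝ (deriv (φ i0)) r :=
      aux_deriv (hφsmooth i0 r hr)
    exact ((h1.hasDerivAt.const_mul t).sub h2.hasDerivAt).deriv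
  have h2 := aux_second_deriv hcw hm
  have h1 := hm.deriv_eq_zero
  rw [hd r hr] at h1
  rw [hdd] at h2
  have e1 := hφeq i0 r hr
  have e2 := mul_neg_of_pos_of_neg ht (hfineq i0 r hr)
  have e3 : 0 ≤ t * (∑ j, V i0 j r * f j r) - ∑ j, V i0 j r * φ j r := by
    rw [Finset.mul_sum, ← Finset.sum_sub_distrib]
    refine Finset.sum_nonneg fun j _ => ?_
    have := mul_nonneg (hV i0 j r hr) (hw j r hr)
    linarith
  have e4 : (1 / r) * (t * deriv (f i0) r - deriv (φ i0) r) = 0 := by rw [h1, mul_zero]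
  have e5 : ((k : ℝ) ^ 2 / r ^ 2) * (t * f i0 r - φ i0 r) = 0 := by rw [hw0, mul_zero]
  linarith

theorem higher_frequency_projection_vanishes {n : ℕ} (hn : 0 < n)
    (A : Matrix (Fin n) (Fin n) ℝ) (β : Fin n → ℝ)
    (hA : H1 A) (hβ : ∀ i, -2 < β i)
    (u : Fin n → ℝ → ℝ) (hu : RadialSolution A β u)
    (k : ℕ) (hk : 1 ≤ k)
    (φ : Fin n → ℝ → ℝ)
    (hφsmooth : ∀ i, ∀ r > (0:ℝ), ContDiffAt ℝ 2 (φ i) r)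
    (hφeq : ∀ i, ∀ r > (0:ℝ),
      deriv (deriv (φ i)) r + (1 / r) * deriv (φ i) r
        + ∑ j, A i j * r ^ β j * Real.exp (u j r) * φ j r
        - ((k : ℝ) ^ 2 / r ^ 2) * φ i r = 0)
    (C : ℝ)
    (hφbd : ∀ i, ∀ r > (0:ℝ), |φ i r| ≤ C * r ^ k / (1 + r) ^ (2 * k))
    (f : Fin n → ℝ → ℝ)
    (hfsmooth : ∀ i, ∀ r > (0:ℝ), ContDiffAt ℝ 2 (f i) r)
    (hfineq : ∀ i, ∀ r > (0:ℝ),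
      deriv (deriv (f i)) r + (1 / r) * deriv (f i) r
        - ((k : ℝ) ^ 2 / r ^ 2) * f i r
        + ∑ j, A i j * r ^ β j * Real.exp (u j r) * f j r < 0)
    (hfpos : ∀ i, ∀ r > (0:ℝ), 0 < f i r)
    (hf0 : ∀ i, Filter.Tendsto (fun r : ℝ => f i r / r ^ k)
      (nhdsWithin 0 (Set.Ioi 0)) Filter.atTop)
    (hfinf : ∀ i, Filter.Tendsto (fun r : ℝ => f i r * r ^ k)
      Filter.atTop Filter.atTop) :
    ∀ i, ∀ r > (0:ℝ), φ i r = 0 := by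
  intro i r hr
  have hV : ∀ i j, ∀ r > (0:ℝ), 0 ≤ A i j * r ^ β j * Real.exp (u j r) := fun i j r hr =>
    mul_nonneg (mul_nonneg (hA.2.1 i j) (Real.rpow_nonneg hr.le _)) (Real.exp_pos _).le
  apply le_antisymm
  · exact aux_nonpos hn (fun i j r => A i j * r ^ β j * Real.exp (u j r)) hV k φ hφsmooth hφeq
      C hφbd f hfsmooth hfineq hfpos hf0 hfinf i r hr
  · have h := aux_nonpos hn (fun i j r => A i j * r ^ β j * Real.exp (u j r)) hV k
      (fun i r => - φ i r) (fun i r hr => (hφsmooth i r hr).neg) (fun i r hr => by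
        have e := hφeq i r hr
        have d1 : deriv (fun r => - φ i r) = fun r => - deriv (φ i) r := by
          funext s
          exact deriv.fun_neg
        rw [d1, deriv.fun_neg]
        simp only [mul_neg, Finset.sum_neg_distrib]
        linarith)
      C (fun i r hr => by simpa using hφbd i r hr) f hfsmooth hfineq hfpos hf0 hfinf i r hr
    simpa using h
end
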